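/- arXiv:2101.02950 — 6 statements merged into one kernel-verified Lean document; each statement's English description precedes it below -/
import Mathlib

section
/- Let L be a lattice of even rank, Γ ≤ O(L), and SO(L) = {γ ∈ O(L) : det(γ) = 1}. Then a primitive isotropic vector l ∈ L spans an irregular 0-dimensional cusp for Γ if and only if it spans an irregular 0-dimensional cusp for Γ ∩ SO(L). In particular, Γ has an irregular 0-dimensional cusp if and only if Γ ∩ SO(L) has an irregular 0-dimensional cusp. -/
/-!
An Eichler transvection along an isotropic vector is unipotent: `1 - E_{m,l}` kills `l`, maps
`m` into `ℚl` and maps `V` into the span of `l` and `m`, so its cube is zero. Hence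
`det E_{m,l} = 1` (`det_eichler`). In even dimension `-1` has determinant `1`, so both `-id` and
every `-E_{m,l}` lie in `Γ` exactly when they lie in its determinant-one part. Thus the two
conditions defining irregularity of `l` are insensitive to passing from `Γ` to `Γ ∩ SO(L)`.
-/


noncomputable section

open LinearMap (BilinForm)

variable {V : Type*} [AddCommGroup V] [Module ℚ V]

/-- The Eichler transvection `E_{m,l}` as a linear endomorphism of `V`:
`E_{m,l}(v) = v - (m,v)•l + (l,v)•m - (1/2)(m,m)(l,v)•l`. -/
def eichler (B : BilinForm ℚ V) (m l : V) : V →ₗ[ℚ] V where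
  toFun u := u - B m u • l + B l u • m - ((1 / 2 : ℚ) * B m m * B l u) • l
  map_add' x y := by
    simp only [map_add, LinearMap.add_apply]
    module
  map_smul' a x := by
    simp only [map_smul, LinearMap.smul_apply, smul_eq_mul, RingHom.id_apply]
    module

/-- `l` is a primitive vector of the lattice `L`. -/
def IsPrimitiveIn (L : Submodule ℤ V) (l : V) : Prop :=
  l ∈ L ∧ ∀ (k : ℤ) (u : V), u ∈ L → l = k • u → k = 1 ∨ k = -1

/-- `I = ℤl` is an irregular 0-dimensional cusp for the group of isometries `S`:
`-id ∉ S` and `-E_{m,l} ∈ S` for some `m ⊥ l`. -/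
def IsIrregular (B : BilinForm ℚ V) (S : Set (V ≃ₗ[ℚ] V)) (l : V) : Prop :=
  LinearEquiv.neg ℚ ∉ S ∧
    ∃ m : V, B m l = 0 ∧ ∃ γ ∈ S, (γ : V →ₗ[ℚ] V) = -(eichler B m l)

/-- `1 - E_{m,l}` is nilpotent of index at most three. -/
lemma isNilpotent_one_sub_eichler (B : BilinForm ℚ V) {m l : V}
    (hll : B l l = 0) (hml : B m l = 0) (hlm : B l m = 0) :
    IsNilpotent (1 - eichler B m l) := by
  refine ⟨3, LinearMap.ext fun u => ?_⟩
  simp [pow_succ, eichler, hll, hml, hlm]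

/-- Evaluating the characteristic polynomial `X ^ dim V` of the nilpotent map `1 - E_{m,l}`
at `1` gives `det E_{m,l} = 1`. -/
lemma det_eichler (B : BilinForm ℚ V) [FiniteDimensional ℚ V] {m l : V}
    (hll : B l l = 0) (hml : B m l = 0) (hlm : B l m = 0) :
    LinearMap.det (eichler B m l) = 1 := by
  have hN := isNilpotent_one_sub_eichler B hll hml hlm
  have h := LinearMap.eval_charpoly (1 - eichler B m l) 1
  rw [hN.charpoly_eq_X_pow_finrank] at h
  simpa using h.symm

lemma det_neg_of_even_finrank [FiniteDimensional ℚ V] (hrank : Even (Module.finrank ℚ V))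
    (f : V →ₗ[ℚ] V) : LinearMap.det (-f) = LinearMap.det f := by
  rw [← neg_one_smul ℚ f, LinearMap.det_smul, hrank.neg_one_pow, one_mul]

/-- for a lattice of even rank, a primitive isotropic `l ∈ L` spans an
irregular cusp for `Γ` iff it does for `Γ ∩ SO(L)`; in particular `Γ` has an irregular
cusp iff `Γ ∩ SO(L)` does. -/
theorem statement4 (B : BilinForm ℚ V) [FiniteDimensional ℚ V]
    (hsymm : ∀ x y : V, B x y = B y x)
    (hnd : LinearMap.BilinForm.Nondegenerate B)
    (L : Submodule ℤ V) (hfg : L.FG)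
    (hspan : Submodule.span ℚ (L : Set V) = ⊤)
    (hint : ∀ x ∈ L, ∀ y ∈ L, ∃ n : ℤ, B x y = (n : ℚ))
    (hrank : Even (Module.finrank ℚ V))
    (Γ : Subgroup (V ≃ₗ[ℚ] V))
    (hΓO : ∀ γ ∈ Γ, ∀ v w : V, B (γ v) (γ w) = B v w)
    (hΓL : ∀ γ ∈ Γ, ∀ x ∈ L, γ x ∈ L) :
    (∀ l : V, IsPrimitiveIn L l → B l l = 0 →
      (IsIrregular B (Γ : Set (V ≃ₗ[ℚ] V)) l ↔
        IsIrregular B {γ : V ≃ₗ[ℚ] V | γ ∈ Γ ∧ LinearMap.det (γ : V →ₗ[ℚ] V) = 1} l)) ∧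
    ((∃ l : V, IsPrimitiveIn L l ∧ B l l = 0 ∧
        IsIrregular B (Γ : Set (V ≃ₗ[ℚ] V)) l) ↔
      (∃ l : V, IsPrimitiveIn L l ∧ B l l = 0 ∧
        IsIrregular B {γ : V ≃ₗ[ℚ] V | γ ∈ Γ ∧ LinearMap.det (γ : V →ₗ[ℚ] V) = 1} l)) := by
  have key : ∀ l : V, B l l = 0 →
      (IsIrregular B (Γ : Set (V ≃ₗ[ℚ] V)) l ↔
        IsIrregular B {γ : V ≃ₗ[ℚ] V | γ ∈ Γ ∧ LinearMap.det (γ : V →ₗ[ℚ] V) = 1} l) := by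
    intro l hll
    have hneg : LinearMap.det ((LinearEquiv.neg ℚ : V ≃ₗ[ℚ] V) : V →ₗ[ℚ] V) = 1 := by
      have h : ((LinearEquiv.neg ℚ : V ≃ₗ[ℚ] V) : V →ₗ[ℚ] V) = -LinearMap.id := by
        ext; simp
      rw [h, det_neg_of_even_finrank hrank, LinearMap.det_id]
    constructor
    · rintro ⟨hn, m, hml, γ, hγ, hE⟩
      refine ⟨fun h => hn h.1, m, hml, γ, ⟨hγ, ?_⟩, hE⟩
      rw [hE, det_neg_of_even_finrank hrank, det_eichler B hll hml ((hsymm l m).trans hml)]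
    · rintro ⟨hn, m, hml, γ, hγ, hE⟩
      exact ⟨fun h => hn ⟨h, hneg⟩, m, hml, γ, hγ.1, hE⟩
  exact ⟨fun l _ hll => key l hll, exists_congr fun l =>
    and_congr_right fun _ => and_congr_right fun hll => key l hll⟩
end
end

section
/- Let L be an even lattice, l ∈ L a primitive isotropic vector, and m ∈ L_ℚ with (m,l) = 0. Then the Eichler transvection E_{m,l} belongs to the stable orthogonal group Õ(L) if and only if m ∈ (l^⊥ ∩ L) + ℚl, where l^⊥ ∩ L = {x ∈ L : (x,l) = 0}. (In the notation of the paper: U(I)_ℤ = L(I) for Γ = Õ(L) and I = ℤl.) -/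
/-!
The key point is that a primitive vector `l` of `L` pairs to `1` with some vector `v` of the dual
lattice (`exists_dual_pairing_one`): the values `(v, l)`, `v ∈ L^∨`, form an ideal `gℤ`, and `g`
divides every coordinate of `l` in a `ℤ`-basis of `L`, so `g = ±1`.

If `E_{m,l}` lies in the discriminant kernel, then for this `v` the vector `E_{m,l}(v) - v ∈ L`
differs from `m` by a multiple of `l`. Conversely, `E_{m,l}` depends only on `m` modulo `ℚl`
(`eichler_add_smul`), and for `m ∈ L` every coefficient in `E_{m,l}(v) - v`, `v ∈ L^∨`, is an
integer because `(m, m)` is even; the inverse of `E_{m,l}` is `E_{-m,l}`.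
-/


noncomputable section

open LinearMap (BilinForm)

variable {V : Type*} [AddCommGroup V] [Module ℚ V]

/-- Membership in the stable orthogonal group (discriminant kernel) `Õ(L)`:
`γ` is an isometry of `B`, preserves `L` (in both directions), and acts trivially
on `L^∨/L`. -/
def MemStableOrth (B : BilinForm ℚ V) (L : Submodule ℤ V) (γ : V ≃ₗ[ℚ] V) : Prop :=
  (∀ v w : V, B (γ v) (γ w) = B v w) ∧ (∀ x ∈ L, γ x ∈ L) ∧ (∀ x ∈ L, γ⁻¹ x ∈ L) ∧
    ∀ v : V, (∀ x ∈ L, ∃ n : ℤ, B v x = (n : ℚ)) → γ v - v ∈ L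

/-- A finitely generated `ℤ`-submodule spanning `V` is the `ℤ`-span of a `ℚ`-basis of `V`. -/
theorem exists_basis_span_int (L : Submodule ℤ V) (hfg : L.FG)
    (hspan : Submodule.span ℚ (L : Set V) = ⊤) :
    ∃ (n : ℕ) (b : Module.Basis (Fin n) ℚ V), L = Submodule.span ℤ (Set.range b) := by
  have : Module.Finite ℤ L := Module.Finite.iff_fg.mpr hfg
  have : IsAddTorsionFree V := IsAddTorsionFree.of_module_rat V
  have : Module.Free ℤ L := inferInstance
  let c := Module.finBasis ℤ L
  have hc : L = Submodule.span ℤ (Set.range fun i => (c i : V)) := by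
    have h := congrArg (Submodule.map L.subtype) c.span_eq
    rw [Submodule.map_span, Submodule.map_top, Submodule.range_subtype, ← Set.range_comp] at h
    exact h.symm
  have hli : LinearIndependent ℤ fun i => (c i : V) :=
    c.linearIndependent.map' L.subtype (Submodule.ker_subtype L)
  have hliQ : LinearIndependent ℚ fun i => (c i : V) :=
    (LinearIndependent.iff_fractionRing ℤ ℚ).mp hli
  have hsp : ⊤ ≤ Submodule.span ℚ (Set.range fun i => (c i : V)) := by
    rw [← hspan, Submodule.span_le]
    intro x hx
    rw [SetLike.mem_coe, hc] at hx
    exact Submodule.span_le_restrictScalars ℤ ℚ _ hx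
  refine ⟨_, Module.Basis.mk hliQ hsp, ?_⟩
  rw [Module.Basis.coe_mk]
  exact hc

/-- A primitive vector of a lattice pairs to `1` with some vector of the dual lattice. -/
theorem exists_dual_pairing_one (B : BilinForm ℚ V) [FiniteDimensional ℚ V]
    (hnd : LinearMap.BilinForm.Nondegenerate B)
    (L : Submodule ℤ V) (hfg : L.FG) (hspan : Submodule.span ℚ (L : Set V) = ⊤)
    (l : V) (hprim : IsPrimitiveIn L l) :
    ∃ v : V, (∀ x ∈ L, ∃ n : ℤ, B v x = (n : ℚ)) ∧ B v l = 1 := by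
  obtain ⟨n, b, hb⟩ := exists_basis_span_int L hfg hspan
  have hbL : ∀ i, b i ∈ L := fun i => hb ▸ Submodule.subset_span ⟨i, rfl⟩
  -- The values at `l` of the dual lattice form an ideal of `ℤ`.
  let I : Ideal ℤ :=
    { carrier := {k | ∃ v : V, (∀ x ∈ L, ∃ n : ℤ, B v x = (n : ℚ)) ∧ B v l = (k : ℚ)}
      zero_mem' := ⟨0, fun x _ => ⟨0, by simp⟩, by simp⟩
      add_mem' := by
        rintro p q ⟨v, hv, hvl⟩ ⟨w, hw, hwl⟩
        refine ⟨v + w, fun x hx => ?_, by simp [hvl, hwl]⟩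
        obtain ⟨s, hs⟩ := hv x hx
        obtain ⟨t, ht⟩ := hw x hx
        exact ⟨s + t, by simp [hs, ht]⟩
      smul_mem' := by
        rintro p q ⟨v, hv, hvl⟩
        refine ⟨(p : ℚ) • v, fun x hx => ?_, by simp [hvl]⟩
        obtain ⟨s, hs⟩ := hv x hx
        exact ⟨p * s, by simp [hs]⟩ }
  obtain ⟨g, hg⟩ := (IsPrincipalIdealRing.principal I).principal
  -- The coordinates of `l` are its pairings with the dual basis, hence lie in `I`.
  have hcoord : ∀ i, ∃ k : ℤ, b.repr l i = (g : ℚ) * k := by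
    intro i
    obtain ⟨v, hv⟩ : ∃ v : V, B v = b.coord i :=
      ⟨(LinearMap.BilinForm.toDual B hnd).symm (b.coord i), by
        ext x
        exact LinearMap.BilinForm.apply_toDual_symm_apply (b.coord i) x⟩
    have hvL : ∀ x ∈ L, ∃ n : ℤ, B v x = (n : ℚ) := by
      intro x hx
      rw [hb] at hx
      rw [hv]
      exact (b.mem_span_iff_repr_mem ℤ x).mp hx i |>.imp fun _ h => h.symm
    obtain ⟨k, hk⟩ := hvL l hprim.1
    have hkI : k ∈ I := ⟨v, hvL, hk⟩
    rw [hg] at hkI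
    obtain ⟨a, rfl⟩ := Submodule.mem_span_singleton.mp hkI
    refine ⟨a, ?_⟩
    rw [hv, Module.Basis.coord_apply] at hk
    rw [hk]
    push_cast [smul_eq_mul]
    ring
  choose k hk using hcoord
  have hlg : l = g • ∑ i, k i • b i := by
    rw [Finset.smul_sum]
    conv_lhs => rw [← b.sum_repr l]
    refine Finset.sum_congr rfl fun i _ => ?_
    rw [hk, mul_smul, Int.cast_smul_eq_zsmul, Int.cast_smul_eq_zsmul]
  have hgI : g ∈ I := hg ▸ Submodule.mem_span_singleton_self g
  have h1 : (1 : ℤ) ∈ I := by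
    rcases hprim.2 g _ (L.sum_mem fun i _ => L.smul_mem _ (hbL i)) hlg with h | h
    · exact h ▸ hgI
    · simpa [h] using I.neg_mem hgI
  simpa using! h1

theorem eichler_apply (B : BilinForm ℚ V) (m l u : V) :
    eichler B m l u = u - B m u • l + B l u • m - ((1 / 2 : ℚ) * B m m * B l u) • l := rfl

theorem eichler_add_smul (B : BilinForm ℚ V) (hsymm : ∀ x y : V, B x y = B y x)
    (l : V) (hl : B l l = 0) (x : V) (hx : B x l = 0) (c : ℚ) :
    eichler B (x + c • l) l = eichler B x l := by
  ext u
  have hx' : B l x = 0 := by rw [hsymm, hx]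
  simp only [eichler_apply, map_add, map_smul, LinearMap.add_apply, LinearMap.smul_apply,
    smul_eq_mul, hl, hx, hx']
  module

theorem eichler_isometry (B : BilinForm ℚ V) (hsymm : ∀ x y : V, B x y = B y x)
    (l : V) (hl : B l l = 0) (m : V) (hm : B m l = 0) (v w : V) :
    B (eichler B m l v) (eichler B m l w) = B v w := by
  have hm' : B l m = 0 := by rw [hsymm, hm]
  simp only [eichler_apply, map_add, map_sub, map_smul, LinearMap.add_apply, LinearMap.sub_apply,
    LinearMap.smul_apply, smul_eq_mul, hl, hm, hm', hsymm v l, hsymm v m]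
  ring

theorem eichler_neg_eichler (B : BilinForm ℚ V) (hsymm : ∀ x y : V, B x y = B y x)
    (l : V) (hl : B l l = 0) (m : V) (hm : B m l = 0) (v : V) :
    eichler B (-m) l (eichler B m l v) = v := by
  have hm' : B l m = 0 := by rw [hsymm, hm]
  simp only [eichler_apply, map_add, map_sub, map_smul, map_neg, LinearMap.neg_apply,
    hl, hm, hm']
  module

/-- The Eichler transvection as an automorphism of `V`, with inverse `E_{-m,l}`. -/
def eichlerEquiv (B : BilinForm ℚ V) (hsymm : ∀ x y : V, B x y = B y x)
    (l : V) (hl : B l l = 0) (m : V) (hm : B m l = 0) : V ≃ₗ[ℚ] V :=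
  { eichler B m l with
    invFun := eichler B (-m) l
    left_inv := eichler_neg_eichler B hsymm l hl m hm
    right_inv := fun v => by
      simpa using! eichler_neg_eichler B hsymm l hl (-m) (by simp [hm]) v }

/-- For `m ∈ L`, the transvection `E_{m,l}` moves each vector of `L^∨` by an element of `L`;
evenness of `(m, m)` absorbs the factor `1/2`. -/
theorem eichler_sub_mem (B : BilinForm ℚ V) (L : Submodule ℤ V)
    (heven : ∀ x ∈ L, ∃ n : ℤ, B x x = 2 * (n : ℚ)) (hsymm : ∀ x y : V, B x y = B y x)
    (l : V) (hlL : l ∈ L) (m : V) (hmL : m ∈ L)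
    (v : V) (hv : ∀ x ∈ L, ∃ n : ℤ, B v x = (n : ℚ)) :
    eichler B m l v - v ∈ L := by
  obtain ⟨p, hp⟩ := hv m hmL
  obtain ⟨q, hq⟩ := hv l hlL
  obtain ⟨r, hr⟩ := heven m hmL
  have h : eichler B m l v - v = (-(p + r * q)) • l + q • m := by
    rw [eichler_apply, hsymm m v, hsymm l v, hp, hq, hr, ← Int.cast_smul_eq_zsmul ℚ (-(p + r * q)),
      ← Int.cast_smul_eq_zsmul ℚ q]
    push_cast
    module
  rw [h]
  exact L.add_mem (L.smul_mem _ hlL) (L.smul_mem _ hmL)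

/-- for an even lattice `L` and a primitive isotropic `l ∈ L`, the Eichler
transvection `E_{m,l}` lies in `Õ(L)` iff `m ∈ (l^⊥ ∩ L) + ℚl`. -/
theorem statement6 (B : BilinForm ℚ V) [FiniteDimensional ℚ V]
    (hsymm : ∀ x y : V, B x y = B y x)
    (hnd : LinearMap.BilinForm.Nondegenerate B)
    (L : Submodule ℤ V) (hfg : L.FG)
    (hspan : Submodule.span ℚ (L : Set V) = ⊤)
    (hint : ∀ x ∈ L, ∀ y ∈ L, ∃ n : ℤ, B x y = (n : ℚ))
    (heven : ∀ x ∈ L, ∃ n : ℤ, B x x = 2 * (n : ℚ))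
    (l : V) (hprim : IsPrimitiveIn L l) (hliso : B l l = 0)
    (m : V) (hml : B m l = 0) :
    (∃ γ : V ≃ₗ[ℚ] V, MemStableOrth B L γ ∧ (γ : V →ₗ[ℚ] V) = eichler B m l) ↔
      ∃ x ∈ L, B x l = 0 ∧ ∃ c : ℚ, m = x + c • l := by
  constructor
  · rintro ⟨γ, ⟨-, -, -, hγ⟩, hγE⟩
    obtain ⟨v, hv, hvl⟩ := exists_dual_pairing_one B hnd L hfg hspan l hprim
    have hmem := hγ v hv
    have hγv : γ v = eichler B m l v := LinearMap.congr_fun hγE v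
    -- As `(l, v) = 1`, the difference `E_{m,l}(v) - v` is congruent to `m` modulo `ℚl`.
    have hdiff : γ v - v = m - (B m v + 1 / 2 * B m m) • l := by
      rw [hγv, eichler_apply, hsymm l v, hvl]
      module
    rw [hdiff] at hmem
    exact ⟨_, hmem, by simp [hml, hliso], B m v + 1 / 2 * B m m, by module⟩
  · rintro ⟨x, hxL, hxl, c, rfl⟩
    rw [eichler_add_smul B hsymm l hliso x hxl c]
    have hE : ∀ y ∈ L, ∀ u ∈ L, eichler B y l u ∈ L := fun y hy u hu => by
      simpa using L.add_mem
        (eichler_sub_mem B L heven hsymm l hprim.1 y hy u (hint u hu)) hu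
    exact ⟨eichlerEquiv B hsymm l hliso x hxl,
      ⟨eichler_isometry B hsymm l hliso x hxl, hE x hxL, hE (-x) (L.neg_mem hxL),
        eichler_sub_mem B L heven hsymm l hprim.1 x hxL⟩, rfl⟩
end
end

section
/- Let L be an even lattice such that Õ(L) has an irregular 0-dimensional cusp, i.e. −id ∉ Õ(L) and there exist a primitive isotropic vector l ∈ L and m ∈ L_ℚ with (m,l) = 0 such that −E_{m,l} ∈ Õ(L). Then there exists a natural number a such that the discriminant group A_L = L^∨/L is isomorphic, as an abstract abelian group, either to ℤ/8 ⊕ (ℤ/2)^a or to ℤ/4 ⊕ ℤ/4 ⊕ (ℤ/2)^a. -/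
/-!
Write `D = L^∨`, `A = D / L`.  The group `A` is determined up to isomorphism of the required kind
as soon as `|2A| = 4`: then `8A = 0`, and in a decomposition of `A` into cyclic groups of orders
`2, 4, 8` (whose doubles have orders `1, 2, 4`) there is either a single factor `ℤ/8` or exactly two
factors `ℤ/4`, the remaining ones being `ℤ/2` (`class_of_card`).

To compute `|2A|`, let `-E ∈ Õ(L)` with `E = E_{m,l}`, so that `v + E v ∈ L` for all `v ∈ D`.
Choose `u ∈ D` with `(u,l) = 1` (`exists_pair_one`).  Since `E` acts as `-1` on `A`, its square
`E_{2m,l}` acts trivially, and evaluating it at `u` gives `2m ∈ L + ℚl`.  As `E` depends only on `m`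
modulo `ℚl`, we may take `m = w / 2` with `w ∈ L`, `(w,l) = 0` and `(u,w) = 0` (`exists_lift`).
With `p = (v,w)`, `q = (v,l)`, `(w,w) = 2n`, the membership `v + E v ∈ L` becomes
`2v ≡ (p/2 + nq/4) l - (q/2) w` modulo `L`.

If `p` were even on all of `D`, then `w ∈ 2L` by double duality, hence `(w,w) ∈ 8ℤ` because `L` is
even, and the congruence would give `2D ⊆ L`, that is `-id ∈ Õ(L)`.  So `p` takes an odd value, and
pairing the congruence with dual vectors shows that `2v ∈ L` if and only if `q` is even and
`4 ∣ 2p + nq` (`two_smul_mem_iff`).  These conditions define a subgroup of index `4` in `D`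
(`index_four`), so `|2A| = 4`.
-/


noncomputable section

open LinearMap (BilinForm)

variable {V : Type*} [AddCommGroup V] [Module ℚ V]

/-- The dual lattice `L^∨ = {v ∈ V : (v, L) ⊆ ℤ}` as a `ℤ`-submodule of `V`. -/
def dualLattice (B : BilinForm ℚ V) (L : Submodule ℤ V) : Submodule ℤ V where
  carrier := {v | ∀ x ∈ L, ∃ n : ℤ, B v x = (n : ℚ)}
  zero_mem' := fun x _ => ⟨0, by simp⟩
  add_mem' := by
    intro a b ha hb x hx
    obtain ⟨n, hn⟩ := ha x hx
    obtain ⟨k, hk⟩ := hb x hx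
    exact ⟨n + k, by rw [map_add, LinearMap.add_apply, hn, hk]; push_cast; ring⟩
  smul_mem' := by
    intro c a ha x hx
    obtain ⟨n, hn⟩ := ha x hx
    refine ⟨c * n, ?_⟩
    have h : (c : ℤ) • a = ((c : ℚ)) • a := (Int.cast_smul_eq_zsmul ℚ c a).symm
    rw [h, map_smul, LinearMap.smul_apply, hn, smul_eq_mul]
    push_cast
    ring

/-- The discriminant group `A_L = L^∨ / L`. -/
abbrev discGroup (B : BilinForm ℚ V) (L : Submodule ℤ V) :=
  (dualLattice B L) ⧸ (Submodule.comap (dualLattice B L).subtype L)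

/-! ### Finite abelian groups `A` with `2A` of order four -/

lemma pi_split {ι : Type*} [DecidableEq ι] (n : ι → ℕ) (i : ι) {k : ℕ} (hk : n i = k) :
    Nonempty ((∀ j, ZMod (n j)) ≃+ ZMod k × (∀ j : {j // j ≠ i}, ZMod (n j))) := by
  subst hk
  exact ⟨{ Equiv.piSplitAt i (fun j => ZMod (n j)) with map_add' := fun _ _ => rfl }⟩

lemma pi_two {ι : Type*} [Finite ι] (n : ι → ℕ) (h : ∀ i, n i = 2) :
    ∃ a : ℕ, Nonempty ((∀ j, ZMod (n j)) ≃+ (Fin a → ZMod 2)) := by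
  obtain rfl : n = fun _ => 2 := funext h
  obtain ⟨a, ⟨e⟩⟩ := Finite.exists_equiv_fin ι
  exact ⟨a, ⟨{ Equiv.arrowCongr e (Equiv.refl (ZMod 2)) with map_add' := fun _ _ => rfl }⟩⟩

/-- The order of `2(ℤ/n)`. -/
def dbl (n : ℕ) : ℕ := Nat.card (Set.range fun x : ZMod n => 2 • x)

lemma dbl_two : dbl 2 = 1 := by
  rw [dbl, Nat.card_eq_fintype_card]; decide

lemma dbl_four : dbl 4 = 2 := by
  rw [dbl, Nat.card_eq_fintype_card]; decide

lemma dbl_eight : dbl 8 = 4 := by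
  rw [dbl, Nat.card_eq_fintype_card]; decide

lemma pi_class {ι : Type*} [Fintype ι] (n : ι → ℕ)
    (hn : ∀ i, n i = 2 ∨ n i = 4 ∨ n i = 8) (hprod : ∏ i, dbl (n i) = 4) :
    ∃ a : ℕ,
      Nonempty ((∀ i, ZMod (n i)) ≃+ (ZMod 8 × (Fin a → ZMod 2))) ∨
      Nonempty ((∀ i, ZMod (n i)) ≃+ ((ZMod 4 × ZMod 4) × (Fin a → ZMod 2))) := by
  classical
  have two_of_one {k : ℕ} (h : k = 2 ∨ k = 4 ∨ k = 8) (h1 : dbl k = 1) : k = 2 := by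
    rcases h with rfl | rfl | rfl
    · rfl
    · simp [dbl_four] at h1
    · simp [dbl_eight] at h1
  by_cases h8 : ∃ i, n i = 8
  · obtain ⟨i, hi⟩ := h8
    rw [Fintype.prod_eq_mul_prod_subtype_ne _ i, hi, dbl_eight] at hprod
    have h1 : ∏ j : {j // j ≠ i}, dbl (n j) = 1 := by omega
    obtain ⟨e⟩ := pi_split n i hi
    obtain ⟨a, ⟨e'⟩⟩ := pi_two (fun j : {j // j ≠ i} => n j)
      fun j => two_of_one (hn j) (Finset.prod_eq_one_iff.1 h1 j (Finset.mem_univ _))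
    exact ⟨a, Or.inl ⟨e.trans ((AddEquiv.refl _).prodCongr e')⟩⟩
  · push Not at h8
    have hn' : ∀ i, n i = 2 ∨ n i = 4 := fun i => by have := hn i; have := h8 i; tauto
    have key : ∀ {κ : Type _} [Fintype κ] (m : κ → ℕ), (∀ i, m i = 2 ∨ m i = 4) →
        ∏ i, dbl (m i) ≠ 1 → ∃ i, m i = 4 := by
      intro κ _ m hm h1
      by_contra! h
      exact h1 (Finset.prod_eq_one fun i _ => by
        rw [(hm i).resolve_right (h i), dbl_two])
    obtain ⟨i, hi⟩ := key n hn' (by omega)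
    rw [Fintype.prod_eq_mul_prod_subtype_ne _ i, hi, dbl_four] at hprod
    obtain ⟨j, hj⟩ := key (fun j : {j // j ≠ i} => n j) (fun j => hn' j) (by omega)
    rw [Fintype.prod_eq_mul_prod_subtype_ne _ j, hj, dbl_four] at hprod
    have h1 : ∏ k : {k // k ≠ j}, dbl (n k) = 1 := by omega
    obtain ⟨e⟩ := pi_split n i hi
    obtain ⟨e₁⟩ := pi_split (fun j : {j // j ≠ i} => n j) j hj
    obtain ⟨a, ⟨e₂⟩⟩ := pi_two (fun k : {k // k ≠ j} => n k)
      fun k => two_of_one (hn k) (Finset.prod_eq_one_iff.1 h1 k (Finset.mem_univ _))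
    refine ⟨a, Or.inr ⟨?_⟩⟩
    exact (e.trans ((AddEquiv.refl _).prodCongr
      (e₁.trans ((AddEquiv.refl _).prodCongr e₂)))).trans AddEquiv.prodAssoc.symm

/-- A finitely generated abelian group whose subgroup of doubles has order four is
`ℤ/8 ⊕ (ℤ/2)^a` or `(ℤ/4)² ⊕ (ℤ/2)^a`. -/
lemma class_of_card {A : Type*} [AddCommGroup A] [Module.Finite ℤ A]
    (hA : Nat.card (nsmulAddMonoidHom (α := A) 2).range = 4) :
    ∃ a : ℕ,
      Nonempty (A ≃+ (ZMod 8 × (Fin a → ZMod 2))) ∨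
      Nonempty (A ≃+ ((ZMod 4 × ZMod 4) × (Fin a → ZMod 2))) := by
  -- `2x` lies in a group of order `4`
  have h8 : ∀ x : A, 8 • x = 0 := by
    intro x
    have h := card_nsmul_eq_zero' (x := (⟨2 • x, x, rfl⟩ : (nsmulAddMonoidHom (α := A) 2).range))
    rw [hA] at h
    have h' := congrArg Subtype.val h
    simpa [smul_smul] using h'
  have : Finite A := by
    apply Module.finite_of_fg_torsion
    intro x
    exact ⟨⟨8, by simp⟩, by simpa [Submonoid.smul_def] using (by exact_mod_cast h8 x : (8 : ℤ) • x = 0)⟩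
  obtain ⟨ι, _, n, hn1, ⟨e⟩⟩ := AddCommGroup.equiv_directSum_zmod_of_finite' A
  classical
  replace e : A ≃+ ∀ i, ZMod (n i) := e.trans (DirectSum.addEquivProd _)
  have hn : ∀ i, n i = 2 ∨ n i = 4 ∨ n i = 8 := by
    intro i
    have h : (8 : ℕ) • (Pi.single i 1 : ∀ i, ZMod (n i)) = 0 := by
      rw [← e.apply_symm_apply (Pi.single i 1), ← map_nsmul, h8, map_zero]
    have h' := congrFun h i
    simp only [Pi.smul_apply, Pi.single_eq_same, Pi.zero_apply, nsmul_eq_mul, mul_one] at h'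
    have hd := (ZMod.natCast_eq_zero_iff _ _).1 h'
    have hle := Nat.le_of_dvd (by norm_num) hd
    have h1 := hn1 i
    clear h h'
    interval_cases n i <;> omega
  have hprod : ∏ i, dbl (n i) = 4 := by
    rw [← hA]
    simp only [dbl]
    rw [← Nat.card_pi]
    symm
    have h1 : Nat.card (nsmulAddMonoidHom (α := A) 2).range =
        Nat.card (Set.range fun x : ∀ i, ZMod (n i) => 2 • x) := by
      refine Nat.card_congr (e.toEquiv.subtypeEquiv ?_)
      intro y
      constructor
      · rintro ⟨x, rfl⟩
        exact ⟨e x, (map_nsmul e 2 x).symm⟩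
      · rintro ⟨x, hx⟩
        refine ⟨e.symm x, e.injective ?_⟩
        simpa using hx
    rw [h1]
    have h2 : (Set.range fun x : ∀ i, ZMod (n i) => 2 • x) =
        Set.pi Set.univ fun i => Set.range fun x : ZMod (n i) => 2 • x := by
      rw [← Set.range_piMap]
      rfl
    rw [h2]
    exact Nat.card_congr (Equiv.Set.univPi _)
  obtain ⟨a, ⟨⟨f⟩⟩ | ⟨⟨f⟩⟩⟩ := pi_class n hn hprod
  · exact ⟨a, Or.inl ⟨e.trans f⟩⟩
  · exact ⟨a, Or.inr ⟨e.trans f⟩⟩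

/-! ### Lattices and Eichler transvections -/

/-- The dual lattice is finitely generated, and `L` is its own double dual. -/
lemma dual_facts (B : BilinForm ℚ V) [FiniteDimensional ℚ V]
    (hsymm : ∀ x y : V, B x y = B y x)
    (hnd : LinearMap.BilinForm.Nondegenerate B)
    (L : Submodule ℤ V) (hfg : L.FG)
    (hspan : Submodule.span ℚ (L : Set V) = ⊤) :
    (dualLattice B L).FG ∧
      ∀ x : V, (∀ v ∈ dualLattice B L, ∃ n : ℤ, B v x = (n : ℚ)) → x ∈ L := by
  classical
  have hlat : Submodule.IsLattice ℚ L := ⟨hfg, hspan⟩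
  have := Submodule.IsLattice.free ℚ L
  have : Module.Finite ℤ L := Module.Finite.iff_fg.2 hfg
  let b₀ := Module.Free.chooseBasis ℤ L
  let b := b₀.extendOfIsLattice ℚ
  have hb : Submodule.span ℤ (Set.range b) = L := by
    have : Set.range b = L.subtype '' Set.range b₀ := by
      rw [← Set.range_comp]
      congr 1
      ext i
      simp [b]
    rw [this, ← Submodule.map_span, b₀.span_eq, Submodule.map_top, Submodule.range_subtype]
  have hD : dualLattice B L = B.dualSubmodule L := by
    ext v
    simp only [LinearMap.BilinForm.mem_dualSubmodule, Submodule.mem_one]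
    exact forall₂_congr fun x _ => exists_congr fun n => by simp [eq_comm]
  constructor
  · rw [hD, ← hb, LinearMap.BilinForm.dualSubmodule_span_of_basis B hnd b]
    exact Submodule.fg_span (Set.finite_range _)
  · intro x hx
    have hB' : B.IsSymm := { eq := hsymm }
    rw [← hb, ← LinearMap.BilinForm.dualSubmodule_dualSubmodule_of_basis (R := ℤ) B hnd hB' b,
      hb, ← hD]
    intro v hv
    obtain ⟨n, hn⟩ := hx v hv
    exact Submodule.mem_one.2 ⟨n, by rw [hsymm, hn]; simp⟩

/-- Pairing with a lattice vector, as an integer-valued homomorphism on the dual lattice. -/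
lemma exists_pairing (B : BilinForm ℚ V) (L : Submodule ℤ V) {x : V} (hx : x ∈ L) :
    ∃ p : dualLattice B L →+ ℤ, ∀ v : dualLattice B L, B (v : V) x = (p v : ℚ) := by
  choose p hp using fun v : dualLattice B L => v.2 x hx
  refine ⟨AddMonoidHom.mk' p fun u v => ?_, hp⟩
  have : ((p (u + v) : ℤ) : ℚ) = p u + p v := by
    rw [← hp, ← hp, ← hp]; simp
  exact_mod_cast this

/-- A primitive vector pairs to `1` with some dual vector. -/
lemma exists_pair_one (B : BilinForm ℚ V) (L : Submodule ℤ V)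
    (hdd : ∀ x : V, (∀ v ∈ dualLattice B L, ∃ n : ℤ, B v x = (n : ℚ)) → x ∈ L)
    {l : V} (hl : IsPrimitiveIn L l) : ∃ u ∈ dualLattice B L, B u l = 1 := by
  obtain ⟨q, hq⟩ := exists_pairing B L hl.1
  obtain ⟨d, hd⟩ := Int.subgroup_cyclic q.range
  have hdvd : ∀ v, d ∣ q v := fun v => by
    have : q v ∈ AddSubgroup.closure {d} := hd ▸ ⟨v, rfl⟩
    rw [AddSubgroup.mem_closure_singleton] at this
    obtain ⟨k, hk⟩ := this
    exact ⟨k, by rw [← hk, smul_eq_mul, mul_comm]⟩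
  obtain ⟨u, hu⟩ : ∃ u, q u = d :=
    (hd ▸ AddSubgroup.subset_closure rfl : d ∈ q.range)
  have hd0 : d ≠ 0 := by
    rintro rfl
    -- if `l` pairs to zero with the dual lattice, all rational multiples of `l` are in `L`
    have h2 : (2⁻¹ : ℚ) • l ∈ L := hdd _ fun v hv => ⟨0, by
      have := hq ⟨v, hv⟩
      rw [zero_dvd_iff.1 (hdvd ⟨v, hv⟩)] at this
      simp_all⟩
    have := hl.2 2 _ h2 (by module)
    omega
  have h2 : (d : ℚ)⁻¹ • l ∈ L := hdd _ fun v hv => by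
    obtain ⟨k, hk⟩ := hdvd ⟨v, hv⟩
    have := hq ⟨v, hv⟩
    rw [hk] at this
    refine ⟨k, ?_⟩
    have hd' : (d : ℚ) ≠ 0 := by exact_mod_cast hd0
    rw [map_smul, smul_eq_mul, this]
    push_cast
    field_simp
  have hd' : (d : ℚ) ≠ 0 := by exact_mod_cast hd0
  have := hl.2 d _ h2 (by rw [← Int.cast_smul_eq_zsmul ℚ, smul_smul, mul_inv_cancel₀ hd', one_smul])
  rcases this with rfl | rfl
  · exact ⟨u, u.2, by rw [hq, hu]; simp⟩
  · exact ⟨-u, neg_mem u.2, by rw [map_neg, LinearMap.neg_apply, hq, hu]; simp⟩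

/-- If `E_{m,l}` acts as `-1` on the discriminant group, then `m` may be replaced, modulo `ℚl`, by
`w / 2` with `w` a lattice vector orthogonal to `l` and to the chosen dual vector `u`. -/
lemma exists_lift (B : BilinForm ℚ V)
    (hsymm : ∀ x y : V, B x y = B y x)
    (L : Submodule ℤ V)
    (hint : ∀ x ∈ L, ∀ y ∈ L, ∃ n : ℤ, B x y = (n : ℚ))
    {l m u : V} (hl : l ∈ L) (hll : B l l = 0) (hml : B m l = 0)
    (hu : u ∈ dualLattice B L) (hul : B u l = 1)
    (hE : ∀ v ∈ dualLattice B L, v + eichler B m l v ∈ L) :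
    ∃ w ∈ L, B w l = 0 ∧ B u w = 0 ∧
      ∀ v, eichler B m l v = v - (B v w / 2) • l + (B v l / 2) • w - (B w w / 8 * B v l) • l := by
  have hEu : eichler B m l u ∈ dualLattice B L := by
    have h : eichler B m l u = (u + eichler B m l u) - u := by abel
    rw [h]
    exact sub_mem (fun x hx => hint _ (hE u hu) x hx) hu
  -- the square of `-1` is trivial on the discriminant group
  have h2 : eichler B m l (eichler B m l u) - u ∈ L := by
    have h : eichler B m l (eichler B m l u) - u =
        (eichler B m l u + eichler B m l (eichler B m l u)) - (u + eichler B m l u) := by abel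
    rw [h]
    exact sub_mem (hE _ hEu) (hE u hu)
  have hlm : B l m = 0 := by rw [hsymm, hml]
  have hlu : B l u = 1 := by rw [hsymm, hul]
  obtain ⟨c, hc⟩ : ∃ c : ℚ, (2 : ℚ) • m - c • l ∈ L := by
    refine ⟨2 * B m u + 2 * B m m, ?_⟩
    convert! h2 using 1
    simp only [eichler, LinearMap.coe_mk, AddHom.coe_mk, map_sub, map_add, map_smul, hlu, hlm, hll,
      hml]
    module
  -- adjust `2m` by a multiple of `l` to make it orthogonal to `u`
  have hw : (2 : ℚ) • m - (2 * B m u) • l ∈ L := by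
    obtain ⟨k, hk⟩ := hu _ hc
    have h := sub_mem hc (L.smul_mem k hl)
    convert! h using 1
    rw [← Int.cast_smul_eq_zsmul ℚ, ← hk]
    simp only [map_sub, map_smul, hul, smul_eq_mul, hsymm u m]
    module
  refine ⟨_, hw, ?_, ?_, fun v => ?_⟩
  · simp [hml, hll]
  · simp [hul, hsymm u m]
  · simp only [eichler, LinearMap.coe_mk, AddHom.coe_mk, map_sub, map_smul, LinearMap.sub_apply,
      LinearMap.smul_apply, hlm, hll, hml, smul_eq_mul, hsymm v]
    module

/-- Under the congruence `2v ≡ (p/2 + nq/4) l - (q/2) w` modulo `L` on the dual lattice, where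
`p = (v,w)`, `q = (v,l)`, `(w,w) = 2n`, the dual vectors with `2v ∈ L` are those satisfying the
stated divisibilities. The vectors `u₀`, `u₁` record that `(p, q)` takes the value `(0, 1)` and a
value `(odd, 0)`; the latter is where the assumption `-id ∉ Õ(L)`, here `hneg`, enters. -/
lemma two_smul_mem_iff (B : BilinForm ℚ V)
    (L : Submodule ℤ V)
    (hdd : ∀ x : V, (∀ v ∈ dualLattice B L, ∃ n : ℤ, B v x = (n : ℚ)) → x ∈ L)
    (heven : ∀ x ∈ L, ∃ n : ℤ, B x x = 2 * (n : ℚ))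
    {l w u : V} (hl : l ∈ L) (hwL : w ∈ L)
    (hu : u ∈ dualLattice B L) (hul : B u l = 1) (huw : B u w = 0)
    (hE : ∀ v ∈ dualLattice B L,
      (2 : ℚ) • v - (B v w / 2) • l + (B v l / 2) • w - (B w w / 8 * B v l) • l ∈ L)
    (hneg : ∃ v ∈ dualLattice B L, (2 : ℚ) • v ∉ L) :
    ∃ (n : ℤ) (p q : dualLattice B L →+ ℤ) (u₀ u₁ : dualLattice B L),
      p u₀ = 0 ∧ q u₀ = 1 ∧ Odd (p u₁) ∧ q u₁ = 0 ∧
      ∀ v : dualLattice B L, (2 : ℚ) • (v : V) ∈ L ↔ Even (q v) ∧ 4 ∣ 2 * p v + n * q v := by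
  obtain ⟨n, hn⟩ := heven w hwL
  obtain ⟨p, hp⟩ := exists_pairing B L hwL
  obtain ⟨q, hq⟩ := exists_pairing B L hl
  have hpu : p ⟨u, hu⟩ = 0 := by exact_mod_cast (hp ⟨u, hu⟩).symm.trans huw
  have hqu : q ⟨u, hu⟩ = 1 := by exact_mod_cast (hq ⟨u, hu⟩).symm.trans hul
  have hE' : ∀ v : dualLattice B L,
      (2 : ℚ) • (v : V) - ((p v : ℚ) / 2) • l + ((q v : ℚ) / 2) • w
        - ((n : ℚ) / 4 * q v) • l ∈ L := by
    intro v
    have h := hE v v.2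
    rw [hp, hq, hn] at h
    convert! h using 3
    ring
  obtain ⟨u₁', hu₁'⟩ : ∃ v, Odd (p v) := by
    by_contra! hno
    simp only [Int.not_odd_iff_even] at hno
    -- then `w ∈ 2L`, so `(w,w) ∈ 8ℤ` and doubling kills the discriminant group
    have hw2 : (2⁻¹ : ℚ) • w ∈ L := hdd _ fun v hv => by
      obtain ⟨k, hk⟩ := hno ⟨v, hv⟩
      refine ⟨k, ?_⟩
      rw [map_smul, smul_eq_mul, hp ⟨v, hv⟩, hk]
      push_cast
      ring
    obtain ⟨k, hk⟩ := heven _ hw2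
    have hnk : (n : ℚ) = 4 * k := by
      simp only [map_smul, LinearMap.smul_apply, smul_eq_mul, hn] at hk
      linarith
    obtain ⟨v, hv, hv2⟩ := hneg
    apply hv2
    obtain ⟨r, hr⟩ := hno ⟨v, hv⟩
    have h := hE' ⟨v, hv⟩
    have h' := sub_mem (add_mem h (L.smul_mem (r + k * q ⟨v, hv⟩) hl))
      (L.smul_mem (q ⟨v, hv⟩) hw2)
    convert! h' using 1
    rw [hnk, hr, ← Int.cast_smul_eq_zsmul ℚ, ← Int.cast_smul_eq_zsmul ℚ]
    push_cast
    module
  refine ⟨n, p, q, ⟨u, hu⟩, u₁' - q u₁' • ⟨u, hu⟩, hpu, hqu, ?_, ?_, fun v => ⟨fun h2 => ?_, ?_⟩⟩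
  · rw [map_sub, map_zsmul, hpu]
    simpa using hu₁'
  · rw [map_sub, map_zsmul, hqu]
    simp
  · -- subtracting the congruence from `2v ∈ L` leaves a lattice vector in the span of
    -- `l` and `w`, whose pairings with dual vectors are integers
    have hx := sub_mem h2 (hE' v)
    have hpair : ∀ t : dualLattice B L, ∃ k : ℤ, 2 * p v * q t - 2 * q v * p t
        + n * q v * q t = 4 * k := by
      intro t
      obtain ⟨k, hk⟩ := t.2 _ hx
      refine ⟨k, ?_⟩
      simp only [map_sub, map_add, map_smul, smul_eq_mul, hp, hq] at hk
      have : (2 * p v * q t - 2 * q v * p t + n * q v * q t : ℚ) = 4 * k := by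
        rw [← hk]; ring
      exact_mod_cast this
    obtain ⟨k, hk⟩ := hpair ⟨u, hu⟩
    rw [hpu, hqu] at hk
    have hdvd : 4 ∣ 2 * p v + n * q v := ⟨k, by linarith⟩
    refine ⟨?_, hdvd⟩
    obtain ⟨j, hj⟩ := hpair u₁'
    have h3 : Even (q v * p u₁') := by
      refine ⟨k * q u₁' - j, ?_⟩
      have : 2 * (q v * p u₁') = 2 * (k * q u₁' - j + (k * q u₁' - j)) := by
        linear_combination q u₁' * hk - hj
      omega
    exact (Int.even_mul.1 h3).resolve_right (by simpa using hu₁')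
  · rintro ⟨⟨j, hj⟩, ⟨k, hk⟩⟩
    have h' := sub_mem (add_mem (hE' v) (L.smul_mem k hl)) (L.smul_mem j hwL)
    convert! h' using 1
    have hk' : (k : ℚ) = (2 * p v + n * q v) / 4 := by
      have : (2 * p v + n * q v : ℚ) = 4 * k := by exact_mod_cast hk
      rw [this]; ring
    rw [← Int.cast_smul_eq_zsmul ℚ, ← Int.cast_smul_eq_zsmul ℚ, hk', hj]
    push_cast
    module

/-- The conditions in `two_smul_mem_iff` cut out a subgroup of index four: it is the kernel of a
surjection onto `ℤ/4` when `n` is odd and onto `(ℤ/2)²` when `n` is even. -/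
lemma index_four {D : Type*} [AddCommGroup D] (n : ℤ) (p q : D →+ ℤ) {u₀ u₁ : D}
    (hp₀ : p u₀ = 0) (hq₀ : q u₀ = 1) (hp₁ : Odd (p u₁)) (hq₁ : q u₁ = 0) (K : AddSubgroup D)
    (hK : ∀ v, v ∈ K ↔ Even (q v) ∧ 4 ∣ 2 * p v + n * q v) : K.index = 4 := by
  rcases Int.even_or_odd n with ⟨n', rfl⟩ | hn
  · let g : D →+ ZMod 2 × ZMod 2 :=
      ((Int.castAddHom (ZMod 2)).comp (p + n' • q)).prod ((Int.castAddHom (ZMod 2)).comp q)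
    have hg : ∀ v, g v = (((p v + n' * q v : ℤ) : ZMod 2), ((q v : ℤ) : ZMod 2)) := by
      intro v; simp [g]
    have hker : g.ker = K := by
      ext v
      rw [AddMonoidHom.mem_ker, hK, hg, Prod.mk_eq_zero, ZMod.intCast_zmod_eq_zero_iff_dvd,
        ZMod.intCast_zmod_eq_zero_iff_dvd, even_iff_two_dvd]
      push_cast
      have : 2 * p v + (n' + n') * q v = 2 * (p v + n' * q v) := by ring
      omega
    have hsurj : Function.Surjective g := by
      have h1 : g u₁ = (1, 0) := by
        rw [hg, hq₁]
        simp [(ZMod.intCast_eq_one_iff_odd).2 hp₁]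
      have h0 : g (u₀ - n' • u₁) = (0, 1) := by
        rw [map_sub, map_zsmul, h1, hg, hq₀, hp₀]
        simp
      rintro ⟨a, b⟩
      refine ⟨(a.val : ℤ) • u₁ + (b.val : ℤ) • (u₀ - n' • u₁), ?_⟩
      rw [map_add, map_zsmul, map_zsmul, h1, h0]
      simp
    rw [← hker, AddSubgroup.index_ker, AddMonoidHom.range_eq_top.2 hsurj]
    simp
  · let g : D →+ ZMod 4 := (Int.castAddHom (ZMod 4)).comp (2 • p + n • q)
    have hg : ∀ v, g v = ((2 * p v + n * q v : ℤ) : ZMod 4) := by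
      intro v; simp [g]
    have hker : g.ker = K := by
      ext v
      rw [AddMonoidHom.mem_ker, hK, hg, ZMod.intCast_zmod_eq_zero_iff_dvd]
      refine ⟨fun h => ⟨?_, by exact_mod_cast h⟩, fun h => by exact_mod_cast h.2⟩
      have h2 : Even (n * q v) := by
        rw [even_iff_two_dvd]; omega
      exact (Int.even_mul.1 h2).resolve_left (by simpa using hn)
    have hsurj : Function.Surjective g := by
      -- the square of an odd number is `1` modulo `4`
      have h1 : g (n • u₀) = 1 := by
        rw [map_zsmul, hg, hq₀, hp₀]
        have : ((n * n - 1 : ℤ) : ZMod 4) = 0 := by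
          rw [ZMod.intCast_zmod_eq_zero_iff_dvd]
          obtain ⟨k, rfl⟩ := hn
          exact ⟨k * k + k, by push_cast; ring⟩
        push_cast at this
        simp
        linear_combination this
      intro a
      refine ⟨(a.val : ℤ) • n • u₀, ?_⟩
      rw [map_zsmul, h1]
      simp
    rw [← hker, AddSubgroup.index_ker, AddMonoidHom.range_eq_top.2 hsurj]
    simp

/-- if the stable orthogonal group `Õ(L)` of an even lattice has an
irregular 0-dimensional cusp, then `A_L ≅ ℤ/8 ⊕ (ℤ/2)^a` or
`A_L ≅ ℤ/4 ⊕ ℤ/4 ⊕ (ℤ/2)^a` as abstract abelian groups. -/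
theorem statement9 (B : BilinForm ℚ V) [FiniteDimensional ℚ V]
    (hsymm : ∀ x y : V, B x y = B y x)
    (hnd : LinearMap.BilinForm.Nondegenerate B)
    (L : Submodule ℤ V) (hfg : L.FG)
    (hspan : Submodule.span ℚ (L : Set V) = ⊤)
    (hint : ∀ x ∈ L, ∀ y ∈ L, ∃ n : ℤ, B x y = (n : ℚ))
    (heven : ∀ x ∈ L, ∃ n : ℤ, B x x = 2 * (n : ℚ))
    (hirr : ∃ l : V, IsPrimitiveIn L l ∧ B l l = 0 ∧
      IsIrregular B {γ : V ≃ₗ[ℚ] V | MemStableOrth B L γ} l) :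
    ∃ a : ℕ,
      Nonempty (discGroup B L ≃+ (ZMod 8 × (Fin a → ZMod 2))) ∨
      Nonempty (discGroup B L ≃+ ((ZMod 4 × ZMod 4) × (Fin a → ZMod 2))) := by
  obtain ⟨l, hprim, hll, hnegS, m, hml, γ, hγ, hγE⟩ := hirr
  obtain ⟨hDfg, hdd⟩ := dual_facts B hsymm hnd L hfg hspan
  obtain ⟨u, hu, hul⟩ := exists_pair_one B L hdd hprim
  have hE : ∀ v ∈ dualLattice B L, v + eichler B m l v ∈ L := by
    intro v hv
    have h := neg_mem (hγ.2.2.2 v hv)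
    have h' : γ v = -eichler B m l v := by
      simpa using congrArg (fun f : V →ₗ[ℚ] V => f v) hγE
    rw [h'] at h
    convert! h using 1
    abel
  obtain ⟨w, hwL, hwl, huw, hEw⟩ := exists_lift B hsymm L hint hprim.1 hll hml hu hul hE
  have hneg : ∃ v ∈ dualLattice B L, (2 : ℚ) • v ∉ L := by
    by_contra! h
    refine hnegS ⟨by simp, by simp, ?_, fun v hv => ?_⟩
    · intro x hx
      have : (LinearEquiv.neg ℚ : V ≃ₗ[ℚ] V)⁻¹ x = -x := by
        rw [LinearEquiv.coe_inv, LinearEquiv.symm_apply_eq]; simp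
      rw [this]
      exact neg_mem hx
    · convert! neg_mem (h v hv) using 1
      simp only [LinearEquiv.neg_apply]
      module
  obtain ⟨n, p, q, u₀, u₁, hp₀, hq₀, hp₁, hq₁, hiff⟩ :=
    two_smul_mem_iff B L hdd heven hprim.1 hwL hu hul huw (fun v hv => by
      convert! hE v hv using 1
      rw [hEw]
      module) hneg
  have : Module.Finite ℤ (dualLattice B L) := Module.Finite.iff_fg.2 hDfg
  apply class_of_card (A := discGroup B L)
  let f : dualLattice B L →+ discGroup B L :=
    (nsmulAddMonoidHom 2).comp
      (Submodule.mkQ (Submodule.comap (dualLattice B L).subtype L)).toAddMonoidHom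
  have hrange : (nsmulAddMonoidHom (α := discGroup B L) 2).range = f.range := by
    ext y
    constructor
    · rintro ⟨x, rfl⟩
      obtain ⟨v, rfl⟩ := Submodule.mkQ_surjective _ x
      exact ⟨v, rfl⟩
    · rintro ⟨v, rfl⟩
      exact ⟨_, rfl⟩
  rw [hrange, ← AddSubgroup.index_ker]
  refine index_four n p q hp₀ hq₀ hp₁ hq₁ _ fun v => ?_
  rw [← hiff, AddMonoidHom.mem_ker]
  have h1 : f v = Submodule.Quotient.mk ((2 : ℕ) • v) := rfl
  rw [h1, Submodule.Quotient.mk_eq_zero, Submodule.mem_comap, Submodule.subtype_apply]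
  have h2 : ((2 • v : dualLattice B L) : V) = (2 : ℚ) • (v : V) := by
    rw [Submodule.coe_smul_of_tower]
    module
  rw [h2]
end
end

section
/- Let M be an even lattice, d a positive integer, and L = M ⊕ ⟨−2d⟩ the orthogonal direct sum, where ⟨−2d⟩ = ℤw with (w,w) = −2d and w ⊥ M. Let Γ = {γ ∈ O(L) : γ(w/2d) − w/2d ∈ L, and either γu − u ∈ L for all u ∈ M^∨ or γu + u ∈ L for all u ∈ M^∨}. If Γ has an irregular 0-dimensional cusp, i.e. −id ∉ Γ and −E_{m,l} ∈ Γ for some primitive isotropic l ∈ L and m ∈ L_ℚ with (m,l) = 0, then d = 2 or d = 4. -/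
/-!
Write `l = a + c w` with `a ∈ M`, let `(l, L) = eℤ`, put `w* = w/2d` and let `γ = -E_{m,l} ∈ Γ`.

* Since `γ l = -l`, the action of `γ` on the class of `l/e` in the discriminant group of `L` gives
  `e ∣ 2c`: if `γ` is `-id` on `A_M`, comparing `w`-components gives `(2c/e) w ∈ L`, and if `γ` is
  `id` on `A_M`, then `2l/e ∈ L`, so `e ∣ 2` by primitivity.
* Picking `v₀ ∈ L` with `(l, v₀) = e`, the vector `γ v₀ + v₀ ∈ L` is `-e m` modulo `ℚl`, while
  `γ w* - w* ∈ L` is `-2w* + c m` modulo `ℚl`. As `e ∣ 2c`, eliminating `m` gives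
  `t l - 4w* ∈ L` for some rational `t`.
* Writing `t = p/q` in lowest terms, the `M`-component gives `a ∈ qM` and the `w`-component gives
  `d ∣ 2q`. Primitivity of `l` makes `q` coprime to `c`, and then `(l, l) = 0` gives `q² ∣ d`.
  Hence `d ∣ 4`.

Finally `d = 1` is excluded, because then `2w* = w ∈ L` and `-id ∈ Γ`.
-/

noncomputable section

open LinearMap (BilinForm)

variable {V : Type*} [AddCommGroup V] [Module ℚ V]

theorem arith_final {d : ℕ} (hd : 0 < d) {q : ℕ} (hq : 0 < q) (h1 : q ^ 2 ∣ d) (h2 : d ∣ 2 * q) :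
    d = 1 ∨ d = 2 ∨ d = 4 := by
  have h3 : q * q ∣ 2 * q := by
    rw [← pow_two]
    exact h1.trans h2
  have h4 : q ∣ 2 := Nat.dvd_of_mul_dvd_mul_right hq h3
  have h5 : q ≤ 2 := Nat.le_of_dvd (by norm_num) h4
  have h6 : d ≤ 2 * q := Nat.le_of_dvd (by omega) h2
  interval_cases q
  · omega
  · obtain ⟨j, rfl⟩ := h1
    omega

/-- A primitive vector stays non-divisible in the sense that `2l ∈ eL` forces `e ∣ 2`. -/
theorem dvd_two_of_primitive {L : Submodule ℤ V} {l : V} (hl : IsPrimitiveIn L l) {e : ℤ} {y : V}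
    (hy : y ∈ L) (h : (2 : ℤ) • l = e • y) : e ∣ 2 := by
  rcases Int.even_or_odd' e with ⟨f, rfl | rfl⟩
  · have h1 : l = f • y := by
      have h2 : (2 : ℚ) • l = (2 : ℚ) • (f • y) := by
        rw [mul_smul] at h
        have e1 : ∀ z : V, (2 : ℚ) • z = (2 : ℤ) • z := fun z => by module
        rw [e1, e1, h]
      exact smul_right_injective V (two_ne_zero : (2 : ℚ) ≠ 0) h2
    rcases hl.2 f y hy h1 with rfl | rfl <;> norm_num
  · have h1 : l = (2 * f + 1) • (l - f • y) := by
      have h3 : (2 * f + 1) • (l - f • y) = (2 * f + 1) • l - f • ((2 * f + 1) • y) := by module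
      rw [h3, ← h]
      module
    rcases hl.2 _ _ (sub_mem hl.1 (L.smul_mem f hy)) h1 with h4 | h4 <;> rw [h4] <;> norm_num

/-- If a rational multiple `t a` of a lattice vector is again a lattice vector, then `a` is divisible
in the lattice by the denominator of `t`. -/
theorem exists_den_smul {M : Submodule ℤ V} {a : V} (ha : a ∈ M) {t : ℚ} (ht : t • a ∈ M) :
    ∃ b ∈ M, a = (t.den : ℤ) • b := by
  have hco : IsCoprime t.num (t.den : ℤ) := by
    rw [Int.isCoprime_iff_nat_coprime]
    simpa using t.reduced
  obtain ⟨α, β, h⟩ := hco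
  refine ⟨α • (t • a) + β • a, add_mem (M.smul_mem α ht) (M.smul_mem β ha), ?_⟩
  have hq : (t.den : ℚ) * t = t.num := by
    rw [mul_comm]
    exact Rat.mul_den_eq_num t
  have h' : (α : ℚ) * t.num + β * t.den = 1 := by exact_mod_cast h
  have e1 : (t.den : ℤ) • (α • (t • a) + β • a)
      = ((α : ℚ) * (t.den * t) + β * t.den) • a := by
    simp only [← Int.cast_smul_eq_zsmul ℚ]
    push_cast
    module
  rw [e1, hq, h', one_smul]

/-- A generator `e` of the ideal `(l, L)`, with a vector `v₀ ∈ L` realizing it. -/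
theorem exists_divisor (B : BilinForm ℚ V) (L : Submodule ℤ V) (l : V)
    (hint : ∀ x ∈ L, ∃ n : ℤ, B l x = n) :
    ∃ e : ℤ, (∃ v ∈ L, B l v = e) ∧ ∀ x ∈ L, ∃ n : ℤ, B l x = e * n := by
  let I : Submodule ℤ ℤ :=
    { carrier := {n | ∃ v ∈ L, B l v = n}
      add_mem' := by
        rintro a b ⟨v, hv, h1⟩ ⟨u, hu, h2⟩
        exact ⟨v + u, add_mem hv hu, by simp [h1, h2]⟩
      zero_mem' := ⟨0, L.zero_mem, by simp⟩
      smul_mem' := by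
        rintro k a ⟨v, hv, h1⟩
        exact ⟨k • v, L.smul_mem k hv, by simp [h1]⟩ }
  obtain ⟨e, he⟩ := (IsPrincipalIdealRing.principal I).principal
  refine ⟨e, ?_, ?_⟩
  · have : e ∈ I := by
      rw [he]
      exact Submodule.mem_span_singleton_self e
    exact this
  · intro x hx
    obtain ⟨n, hn⟩ := hint x hx
    have : n ∈ I := ⟨x, hx, hn⟩
    rw [he] at this
    obtain ⟨k, hk⟩ := Submodule.mem_span_singleton.1 this
    refine ⟨k, ?_⟩
    rw [hn, ← hk]
    simp [mul_comm]

/-- for `L = M ⊕ ⟨-2d⟩` and the group `Γ` acting by `±id` on `A_M` and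
trivially on `A_{⟨-2d⟩}` (the O'Grady-10 modular group), an irregular 0-dimensional
cusp forces `d = 2` or `d = 4`. -/
theorem statement11 (B : BilinForm ℚ V) [FiniteDimensional ℚ V]
    (hsymm : ∀ x y : V, B x y = B y x)
    (hnd : LinearMap.BilinForm.Nondegenerate B)
    (M : Submodule ℤ V)
    (hintM : ∀ x ∈ M, ∀ y ∈ M, ∃ n : ℤ, B x y = (n : ℚ))
    (hevenM : ∀ x ∈ M, ∃ n : ℤ, B x x = 2 * (n : ℚ))
    (d : ℕ) (hd : 0 < d) (w : V) (hw : B w w = -(2 * (d : ℚ)))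
    (horth : ∀ x ∈ M, B w x = 0)
    (L : Submodule ℤ V) (hL : L = M ⊔ Submodule.span ℤ {w})
    (hfg : L.FG) (hspan : Submodule.span ℚ (L : Set V) = ⊤)
    (Γ : Set (V ≃ₗ[ℚ] V))
    (hΓ : Γ = {γ : V ≃ₗ[ℚ] V |
      (∀ v u : V, B (γ v) (γ u) = B v u) ∧ (∀ x ∈ L, γ x ∈ L) ∧ (∀ x ∈ L, γ⁻¹ x ∈ L) ∧
      γ ((2 * (d : ℚ))⁻¹ • w) - (2 * (d : ℚ))⁻¹ • w ∈ L ∧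
      ((∀ u : V, u ∈ Submodule.span ℚ (M : Set V) →
          (∀ x ∈ M, ∃ n : ℤ, B u x = (n : ℚ)) → γ u - u ∈ L) ∨
        (∀ u : V, u ∈ Submodule.span ℚ (M : Set V) →
          (∀ x ∈ M, ∃ n : ℤ, B u x = (n : ℚ)) → γ u + u ∈ L))})
    (hirr : ∃ l : V, IsPrimitiveIn L l ∧ B l l = 0 ∧ IsIrregular B Γ l) :
    d = 2 ∨ d = 4 := by
  have hd0 : (d : ℚ) ≠ 0 := by exact_mod_cast hd.ne'
  obtain ⟨l, hl, hll, hneg, m, hml, γ, hγΓ, hγE⟩ := hirr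
  have hwL : w ∈ L := by
    rw [hL]
    exact Submodule.mem_sup_right (Submodule.mem_span_singleton_self w)
  have hML : ∀ x ∈ M, x ∈ L := fun x hx => by
    rw [hL]
    exact Submodule.mem_sup_left hx
  have hdec : ∀ x ∈ L, ∃ a ∈ M, ∃ n : ℤ, x = a + (n : ℚ) • w := by
    intro x hx
    rw [hL] at hx
    obtain ⟨a, ha, b, hb, rfl⟩ := Submodule.mem_sup.1 hx
    obtain ⟨n, rfl⟩ := Submodule.mem_span_singleton.1 hb
    exact ⟨a, ha, n, by rw [Int.cast_smul_eq_zsmul]⟩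
  have hzmem : ∀ (n : ℤ) (x : V), x ∈ L → (n : ℚ) • x ∈ L := fun n x hx => by
    rw [Int.cast_smul_eq_zsmul]
    exact L.smul_mem n hx
  have hd1 : d ≠ 1 := by
    rintro rfl
    apply hneg
    rw [hΓ]
    refine ⟨fun v u => by simp, fun x hx => by simpa using hx, fun x hx => ?_, ?_, Or.inr ?_⟩
    · have hx' : (LinearEquiv.neg ℚ : V ≃ₗ[ℚ] V)⁻¹ x = -x := by
        change (LinearEquiv.neg ℚ : V ≃ₗ[ℚ] V).symm x = -x
        rw [LinearEquiv.symm_apply_eq]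
        simp
      rw [hx']
      exact neg_mem hx
    · have : (LinearEquiv.neg ℚ : V ≃ₗ[ℚ] V) ((2 * ((1 : ℕ) : ℚ))⁻¹ • w)
          - (2 * ((1 : ℕ) : ℚ))⁻¹ • w = -w := by
        simp only [LinearEquiv.neg_apply]
        push_cast
        module
      rw [this]
      exact neg_mem hwL
    · intro u _ _
      simp
  rw [hΓ] at hγΓ
  obtain ⟨-, hγL, -, hγw, hγM⟩ := hγΓ
  have hγ : ∀ u, γ u = -(u - B m u • l + B l u • m - ((1 / 2 : ℚ) * B m m * B l u) • l) := by
    intro u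
    have := LinearMap.congr_fun hγE u
    simpa [eichler] using this
  have hγl : γ l = -l := by
    rw [hγ, hml, hll]
    simp
  obtain ⟨a, ha, c, hlac⟩ := hdec l hl.1
  have haw : B a w = 0 := by rw [hsymm, horth a ha]
  have hlw : B l w = -(2 * d * c) := by
    rw [hlac]
    simp [haw, hw]
    ring
  have hlM : ∀ x ∈ M, B l x = B a x := by
    intro x hx
    rw [hlac]
    simp [horth x hx]
  have hintl : ∀ x ∈ L, ∃ n : ℤ, B l x = n := by
    intro x hx
    obtain ⟨b, hb, n, rfl⟩ := hdec x hx
    obtain ⟨k, hk⟩ := hintM a ha b hb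
    refine ⟨k + n * -(2 * d * c), ?_⟩
    simp only [map_add, map_smul, smul_eq_mul, hlw, hlM b hb, hk]
    push_cast
    ring
  obtain ⟨e, ⟨v₀, hv₀, hlv₀⟩, hediv⟩ := exists_divisor B L l hintl
  have hl0 : l ≠ 0 := by
    intro h
    have := hl.2 2 0 L.zero_mem (by simp [h])
    omega
  -- `e = 0` would put `l` in the radical of the form, since `L` spans `V`.
  have he0 : (e : ℚ) ≠ 0 := by
    intro h
    apply hl0
    have hBl : B l = 0 := by
      apply LinearMap.ext_on (s := (L : Set V)) hspan
      intro x hx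
      obtain ⟨n, hn⟩ := hediv x hx
      simp [hn, h]
    exact hnd.1 l (fun y => by rw [hBl]; rfl)
  obtain ⟨k, hk⟩ := hediv w hwL
  -- `(c/e)(γ w - w) ∈ L`, as `(c/e) w` is the integral multiple `-k w*` of `w* = w/2d`.
  have hcw : ((c : ℚ) / e) • (γ w - w) ∈ L := by
    have h1 := hzmem (-k) _ hγw
    have h2 : ((-k : ℤ) : ℚ) * (2 * (d : ℚ))⁻¹ = c / e := by
      rw [hlw] at hk
      push_cast
      field_simp
      linarith
    rw [map_smul, ← smul_sub, smul_smul, h2] at h1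
    exact h1
  have hu1 : (e : ℚ)⁻¹ • a ∈ Submodule.span ℚ (M : Set V) :=
    Submodule.smul_mem _ _ (Submodule.subset_span ha)
  have hu2 : ∀ x ∈ M, ∃ n : ℤ, B ((e : ℚ)⁻¹ • a) x = n := by
    intro x hx
    obtain ⟨n, hn⟩ := hediv x (hML x hx)
    refine ⟨n, ?_⟩
    rw [hlM x hx] at hn
    simp [hn]
    field_simp
  have hγa : γ a = -l - (c : ℚ) • γ w := by
    have : a = l - (c : ℚ) • w := by rw [hlac]; module
    rw [this, map_sub, map_smul, hγl]
  have he2c : e ∣ 2 * c := by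
    rcases hγM with h | h
    · have h1 := add_mem (h _ hu1 hu2) hcw
      have h2 : γ ((e : ℚ)⁻¹ • a) - (e : ℚ)⁻¹ • a + ((c : ℚ) / e) • (γ w - w)
          = -((2 / e : ℚ) • l) := by
        rw [map_smul, hγa, hlac]
        module
      rw [h2, neg_mem_iff] at h1
      refine (dvd_two_of_primitive hl h1 ?_).mul_right c
      rw [← Int.cast_smul_eq_zsmul ℚ e, smul_smul, ← Int.cast_smul_eq_zsmul ℚ 2]
      congr 1
      push_cast
      field_simp
    · have h1 := add_mem (h _ hu1 hu2) hcw
      have h2 : γ ((e : ℚ)⁻¹ • a) + (e : ℚ)⁻¹ • a + ((c : ℚ) / e) • (γ w - w)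
          = -((2 * c / e : ℚ) • w) := by
        rw [map_smul, hγa, hlac]
        module
      rw [h2, neg_mem_iff] at h1
      obtain ⟨b, hb, n, hn⟩ := hdec _ h1
      have h3 := congrArg (B w) hn
      simp only [map_add, map_smul, smul_eq_mul, hw, horth b hb, zero_add] at h3
      have h4 : (2 * c / e : ℚ) = n := by
        have : (-(2 * (d : ℚ))) ≠ 0 := by simpa using hd0
        exact mul_right_cancel₀ this h3
      rw [div_eq_iff he0] at h4
      exact ⟨n, by rw [mul_comm e]; exact_mod_cast h4⟩
  obtain ⟨n, hn⟩ := he2c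
  have hnq : (2 * c : ℚ) = e * n := by exact_mod_cast hn
  have hlws : B l ((2 * (d : ℚ))⁻¹ • w) = -c := by
    rw [map_smul, hlw, smul_eq_mul]
    field_simp
  -- The combination in which the coefficient `2c - en` of `m` vanishes.
  obtain ⟨t, ht⟩ : ∃ t : ℚ, t • l - (2 / d : ℚ) • w ∈ L := by
    have h1 := add_mem (hzmem 2 _ hγw) (hzmem n _ (add_mem (hγL v₀ hv₀) hv₀))
    rw [hγ, hγ v₀, hlws, hlv₀] at h1
    refine ⟨2 * (B m ((2 * (d : ℚ))⁻¹ • w) + (1 / 2 : ℚ) * B m m * -c)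
      + n * (B m v₀ + (1 / 2 : ℚ) * B m m * e), ?_⟩
    convert h1 using 1
    have h2 : (2 / d : ℚ) • w = (4 : ℚ) • ((2 * (d : ℚ))⁻¹ • w) := by
      rw [smul_smul]
      congr 1
      field_simp
      norm_num
    have h3 : (2 * c - e * n : ℚ) • m = 0 := by rw [hnq, sub_self, zero_smul]
    rw [h2]
    generalize (2 * (d : ℚ))⁻¹ • w = w'
    generalize B m w' = s
    rw [← sub_eq_zero, ← neg_eq_zero, ← h3]
    push_cast
    module
  obtain ⟨a', ha', n', hn'⟩ := hdec _ ht
  have hcoef : t * c - 2 / d = n' := by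
    have h3 := congrArg (B w) hn'
    rw [hlac] at h3
    simp only [map_add, map_sub, map_smul, smul_eq_mul, hw, horth a ha, horth a' ha',
      zero_add] at h3
    have : (-(2 * (d : ℚ))) ≠ 0 := by simpa using hd0
    apply mul_right_cancel₀ this
    linarith
  have hta : t • a ∈ M := by
    have : t • a = a' := by
      rw [hlac, ← hcoef] at hn'
      have h4 : t • a = (t • (a + (c : ℚ) • w) - (2 / d : ℚ) • w) - (t * c - 2 / d : ℚ) • w := by
        module
      rw [h4, hn']
      module
    rw [this]
    exact ha'
  obtain ⟨b, hb, hab⟩ := exists_den_smul ha hta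
  obtain ⟨r, hr⟩ := hevenM b hb
  have hqc : IsCoprime (t.den : ℤ) c := by
    rw [Int.isCoprime_iff_gcd_eq_one]
    obtain ⟨q', hq'⟩ := Int.gcd_dvd_left (t.den : ℤ) c
    obtain ⟨c', hc'⟩ := Int.gcd_dvd_right (t.den : ℤ) c
    set g := Int.gcd (t.den : ℤ) c
    have h1 : l = (g : ℤ) • (q' • b + c' • w) := by
      rw [hlac, hab, Int.cast_smul_eq_zsmul, smul_add, smul_smul, smul_smul, ← hq', ← hc']
    have := hl.2 _ _ (add_mem (L.smul_mem q' (hML b hb)) (L.smul_mem c' hwL)) h1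
    omega
  have hiso : (t.den : ℤ) ^ 2 * r = d * c ^ 2 := by
    have h1 : B l l = (t.den : ℚ) ^ 2 * (2 * r) - 2 * d * c ^ 2 := by
      have hbw : B b w = 0 := by rw [hsymm, horth b hb]
      rw [hlac, hab]
      simp [hw, hr, horth b hb, hbw]
      ring
    rw [hll] at h1
    have h2 : (t.den : ℚ) ^ 2 * r = d * c ^ 2 := by linarith
    exact_mod_cast h2
  have hq2d : t.den ^ 2 ∣ d := by
    have h1 : (t.den : ℤ) ^ 2 ∣ d :=
      (hqc.pow (m := 2) (n := 2)).dvd_of_dvd_mul_right ⟨r, hiso.symm⟩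
    exact_mod_cast h1
  have hd2q : d ∣ 2 * t.den := by
    have h1 : (2 * t.den : ℚ) = d * (t.num * c - n' * t.den) := by
      have hq0 : (t.den : ℚ) ≠ 0 := by exact_mod_cast t.den_nz
      have h3 := Rat.mul_den_eq_num t
      rw [← h3, ← hcoef]
      field_simp
      ring
    have h2 : (d : ℤ) ∣ 2 * t.den := ⟨t.num * c - n' * t.den, by exact_mod_cast h1⟩
    exact_mod_cast h2
  rcases arith_final hd t.den_pos hq2d hd2q with h | h
  · exact absurd h hd1
  · exact h
end
end

section
/- Let M be an even lattice, d a positive integer, and L = M ⊕ ⟨−2d⟩ = M ⊕ ℤw the orthogonal direct sum with (w,w) = −2d. Let Γ = {γ ∈ O(L) : γ(w/2d) − w/2d ∈ L and γu − det(γ)·u ∈ L for all u ∈ M^∨}, where det(γ) ∈ {±1} is the determinant of γ on L_ℚ. (a) If Γ has an irregular 0-dimensional cusp (−id ∉ Γ and −E_{m,l} ∈ Γ for some primitive isotropic l ∈ L and m ⊥ l in L_ℚ), then d divides 4. (b) If moreover the rank of L is even and Γ has an irregular 0-dimensional cusp, then the discriminant group A_L = L^∨/L is isomorphic as an abelian group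 to ℤ/8 ⊕ (ℤ/2)^a or to ℤ/4 ⊕ ℤ/4 ⊕ (ℤ/2)^a for some natural number a. -/
/-!
Write `E = E_{m,l}` with `-E ∈ Γ`, and `A = L^∨ / L`. Since `E` is unipotent with `(E - 1)³ = 0`, any
vector with `E v ≡ -v` modulo `L` satisfies `8 v ∈ L` (`eight_smul_mem`). Membership of `-E` in `Γ`
gives this for `w / 2d`, which has order `2d` in `A`, so `2d ∣ 8`.

If the rank is even, `det (-E) = 1`, so `E` acts as `-1` on all of `A`. Hence `8 A = 0`, and `2 A ≠ 0`
because `-id ∉ Γ`. The lemma `core` shows `|2A| = 4`, as follows. As `l` is primitive there is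
`f ∈ L^∨` with `(l, f) = 1`. Applying `E = -1` to the multiples of `l` in `L^∨` shows that they lie in
`ℤ (l/2)`, whence the divisibility of `l` in `L` divides `2`. For `v ∈ L^∨ ∩ l^⊥` the relation
`E v ≡ -v` reads `2 v ≡ (m, v) l`, with `2 (m, v) ∈ ℤ`. If all these `(m, v)` were integral, biduality
would give `m ∈ L + ℚ l`, and then evenness of `L` and `E f ≡ -f` would give `2 f ∈ L`, so `2 A = 0`.
Hence some `a ⊥ l` has `2 a ≡ l/2`, and `2 A` is generated by `2 f` and `l/2`. Here
`4 f ∈ ℤ (l/2) + L`, because `2 f - g ⊥ l` when `g ∈ L` has `(l, g) = 2`; and `2 f ∉ ℤ (l/2) + L`,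
because otherwise `1/2 = (f, l/2) ≡ (f, 2a) = (2f, a) ≡ 0` modulo `ℤ`. So `2 A` has four elements.
The structure theorem for finite abelian groups concludes (`classify`).
-/

noncomputable section

open LinearMap (BilinForm)

variable {V : Type*} [AddCommGroup V] [Module ℚ V]

/-! ### Finite abelian groups with four doubles -/

/-- Splitting the factor at `i` off a product of abelian groups. -/
def piSplitAddEquiv {ι : Type} [DecidableEq ι] (G : ι → Type) [∀ i, AddCommGroup (G i)] (i : ι) :
    (∀ j, G j) ≃+ G i × (∀ j : {j // j ≠ i}, G j) :=
  { Equiv.piSplitAt i G with map_add' := fun _ _ => rfl }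

theorem pi_zmod_two {κ : Type} [Fintype κ] (n : κ → ℕ) (h : ∀ i, n i = 2) :
    Nonempty ((∀ i, ZMod (n i)) ≃+ (Fin (Fintype.card κ) → ZMod 2)) := by
  obtain rfl : n = fun _ => 2 := funext h
  let e := Fintype.equivFin κ
  exact ⟨{ Equiv.arrowCongr e (Equiv.refl (ZMod 2)) with map_add' := fun _ _ => rfl }⟩

theorem ncard_range_double_pi {ι : Type} [Fintype ι] (n : ι → ℕ)
    (hn : ∀ i, n i = 2 ∨ n i = 4 ∨ n i = 8) :
    (Set.range fun x : (∀ i, ZMod (n i)) => x + x).ncard = ∏ i, n i / 2 := by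
  have h1 : (Set.range fun x : (∀ i, ZMod (n i)) => x + x)
      = Set.pi Set.univ fun i => Set.range fun x : ZMod (n i) => x + x := by
    exact (Set.range_piMap (fun i (x : ZMod (n i)) => x + x))
  rw [h1, ← Nat.card_coe_set_eq, Nat.card_congr (Equiv.Set.univPi _), Nat.card_pi]
  refine Finset.prod_congr rfl fun i _ => ?_
  rcases hn i with h | h | h <;> rw [h, Nat.card_eq_fintype_card] <;> decide

/-- A finite abelian group `A` of exponent dividing `8` is a product of copies of `ℤ/2`, `ℤ/4`,
`ℤ/8`, whose doubles have `1`, `2`, `4` elements. So `|2A| = 4` leaves one factor `ℤ/8`, or two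
factors `ℤ/4`, besides copies of `ℤ/2`. -/
theorem classify {A : Type*} [AddCommGroup A] [Finite A] (h8 : ∀ a : A, (8 : ℕ) • a = 0)
    (h4 : (Set.range fun a : A => a + a).ncard = 4) :
    ∃ a : ℕ, Nonempty (A ≃+ (ZMod 8 × (Fin a → ZMod 2))) ∨
        Nonempty (A ≃+ ((ZMod 4 × ZMod 4) × (Fin a → ZMod 2))) := by
  classical
  obtain ⟨ι, _, n, hn1, ⟨e₀⟩⟩ := AddCommGroup.equiv_directSum_zmod_of_finite' A
  let e : A ≃+ ∀ i, ZMod (n i) := e₀.trans (DirectSum.addEquivProd _)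
  have hn : ∀ i, n i = 2 ∨ n i = 4 ∨ n i = 8 := by
    intro i
    have h := congrArg e (h8 (e.symm (Pi.single i 1)))
    rw [map_nsmul, map_zero, e.apply_symm_apply] at h
    have h' := congrFun h i
    simp only [Pi.smul_apply, Pi.single_eq_same, Pi.zero_apply, nsmul_eq_mul, mul_one] at h'
    rw [ZMod.natCast_eq_zero_iff] at h'
    clear h
    have := Nat.le_of_dvd (by norm_num) h'
    have := hn1 i
    interval_cases n i <;> simp_all
  have hprod : ∏ i, n i / 2 = 4 := by
    rw [← ncard_range_double_pi n hn, ← h4, ← Set.ncard_image_of_injective _ e.injective]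
    congr 1
    ext y
    constructor
    · rintro ⟨x, rfl⟩
      exact ⟨_, ⟨e.symm x, rfl⟩, by simp⟩
    · rintro ⟨_, ⟨x, rfl⟩, rfl⟩
      exact ⟨e x, by simp⟩
  -- A factor different from `ℤ/2` exists, otherwise the product would be `1`.
  obtain ⟨i, hi⟩ : ∃ i, n i ≠ 2 := by
    by_contra! h
    simp [h] at hprod
  let e₁ := e.trans (piSplitAddEquiv (fun i => ZMod (n i)) i)
  have hp₁ := Fintype.prod_eq_mul_prod_subtype_ne (fun i => n i / 2) i
  rw [hprod] at hp₁
  rcases (hn i).resolve_left hi with hi4 | hi8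
  · have hp₂ : ∏ j : {j // j ≠ i}, n j / 2 = 2 := by
      rw [hi4] at hp₁; omega
    obtain ⟨j, hj⟩ : ∃ j : {j // j ≠ i}, n j ≠ 2 := by
      by_contra! h
      simp [h] at hp₂
    have hp₃ := Fintype.prod_eq_mul_prod_subtype_ne (fun j : {j // j ≠ i} => n j / 2) j
    rw [hp₂] at hp₃
    have hj4 : n j = 4 := by
      rcases (hn j).resolve_left hj with h | h
      · exact h
      · rw [h] at hp₃; omega
    have hp₄ : ∏ k : {k : {j // j ≠ i} // k ≠ j}, n k / 2 = 1 := by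
      rw [hj4] at hp₃; omega
    obtain ⟨e₂⟩ := pi_zmod_two (fun k : {k : {j // j ≠ i} // k ≠ j} => n k) (by
      intro k
      have := Finset.prod_eq_one_iff.1 hp₄ k (Finset.mem_univ _)
      rcases hn k with h | h | h <;> rw [h] at this ⊢ <;> omega)
    let e₃ := piSplitAddEquiv (fun j : {j // j ≠ i} => ZMod (n j)) j
    exact ⟨_, .inr ⟨e₁.trans (((ZMod.ringEquivCongr hi4).toAddEquiv.prodCongr
      (e₃.trans ((ZMod.ringEquivCongr hj4).toAddEquiv.prodCongr e₂))).trans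
        AddEquiv.prodAssoc.symm)⟩⟩
  · have hp₄ : ∏ k : {k // k ≠ i}, n k / 2 = 1 := by
      rw [hi8] at hp₁; omega
    obtain ⟨e₂⟩ := pi_zmod_two (fun k : {k // k ≠ i} => n k) (by
      intro k
      have := Finset.prod_eq_one_iff.1 hp₄ k (Finset.mem_univ _)
      rcases hn k with h | h | h <;> rw [h] at this ⊢ <;> omega)
    exact ⟨_, .inl ⟨e₁.trans ((ZMod.ringEquivCongr hi8).toAddEquiv.prodCongr e₂)⟩⟩

/-! ### The discriminant group at an irregular cusp -/

theorem intSmul (L : Submodule ℤ V) (n : ℤ) {x : V} (hx : x ∈ L) : (n : ℚ) • x ∈ L := by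
  rw [Int.cast_smul_eq_zsmul]; exact L.smul_mem n hx

/-- Only integral multiples of a primitive vector lie in the lattice. -/
theorem primitive_smul {L : Submodule ℤ V} {l : V} (hl : IsPrimitiveIn L l) {r : ℚ}
    (hr : r • l ∈ L) : ∃ n : ℤ, r = n := by
  obtain ⟨a, b, hab⟩ : IsCoprime r.num (r.den : ℤ) := by
    rw [Int.isCoprime_iff_gcd_eq_one]; exact r.reduced
  have hden : (r.den : ℚ) ≠ 0 := by exact_mod_cast r.den_nz
  have hnum : r * r.den = r.num := Rat.mul_den_eq_num r
  have hu : (r.den : ℚ)⁻¹ • l ∈ L := by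
    have : (r.den : ℚ)⁻¹ • l = (a : ℚ) • (r • l) + (b : ℚ) • l := by
      rw [smul_smul, ← add_smul]
      congr 1
      have hab' : (a : ℚ) * r.num + b * r.den = 1 := by exact_mod_cast hab
      rw [← hnum] at hab'
      field_simp
      linarith
    rw [this]
    exact L.add_mem (intSmul L a hr) (intSmul L b hl.1)
  have h1 := hl.2 r.den _ hu (by
    rw [← Int.cast_smul_eq_zsmul ℚ, smul_smul]; simp [hden])
  refine ⟨r.num, ?_⟩
  have : r.den = 1 := by omega
  rw [← hnum, this]; simp

/-- The values of `(l, ·)` on `N`, if integral, form an ideal `kℤ`. -/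
theorem exists_generator (B : BilinForm ℚ V) (l : V) (N : Submodule ℤ V)
    (hN : ∀ v ∈ N, ∃ n : ℤ, B l v = n) :
    ∃ k : ℤ, (∀ v ∈ N, ∃ n : ℤ, B l v = n * k) ∧
      ∀ n : ℤ, ∃ v ∈ N, B l v = n * k := by
  let H : AddSubgroup ℤ :=
    (N.toAddSubgroup.map (B l).toAddMonoidHom).comap (Int.castAddHom ℚ)
  obtain ⟨k, hk⟩ := Int.subgroup_cyclic H
  have hmem : ∀ n : ℤ, n ∈ H ↔ ∃ v ∈ N, B l v = n := fun n => Iff.rfl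
  refine ⟨k, fun v hv => ?_, fun n => ?_⟩
  · obtain ⟨n, hn⟩ := hN v hv
    have h : n ∈ H := (hmem n).2 ⟨v, hv, hn⟩
    rw [hk, AddSubgroup.mem_closure_singleton] at h
    obtain ⟨c, rfl⟩ := h
    exact ⟨c, by rw [hn]; simp⟩
  · have h : n * k ∈ H := by
      rw [hk, AddSubgroup.mem_closure_singleton]; exact ⟨n, by simp⟩
    obtain ⟨v, hv, h⟩ := (hmem _).1 h
    exact ⟨v, hv, by rw [h]; push_cast; rfl⟩

/-- If `E_{m,l}` acts as `-1` on the discriminant group `A` of an even lattice and `2A ≠ 0`, then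
`2A = {0, 2a, 2b, 2a + 2b}` has exactly four elements. The vector `b` is chosen with `(l, b) = 1`,
while `a ⊥ l` satisfies `2a ≡ l/2`. -/
theorem core (B : BilinForm ℚ V) (hsymm : ∀ x y : V, B x y = B y x) (L : Submodule ℤ V)
    (h_int : L ≤ dualLattice B L) (heven : ∀ x ∈ L, ∃ n : ℤ, B x x = 2 * (n : ℚ))
    (hdd : ∀ x, (∀ v ∈ dualLattice B L, ∃ n : ℤ, B x v = n) → x ∈ L)
    (l m : V) (hl : IsPrimitiveIn L l) (hll : B l l = 0) (hml : B m l = 0)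
    (hE : ∀ v ∈ dualLattice B L, eichler B m l v + v ∈ L)
    (hnot : ∃ v ∈ dualLattice B L, v + v ∉ L) :
    ∃ a ∈ dualLattice B L, ∃ b ∈ dualLattice B L,
      a + a ∉ L ∧ b + b ∉ L ∧ (a + a) + (b + b) ∉ L ∧ (a + a) - (b + b) ∉ L ∧
      ∀ v ∈ dualLattice B L, v + v ∈ L ∨ (v + v) - (a + a) ∈ L ∨ (v + v) - (b + b) ∈ L ∨
        (v + v) - ((a + a) + (b + b)) ∈ L := by
  have hlm : B l m = 0 := by rw [hsymm, hml]
  have hlD : l ∈ dualLattice B L := h_int hl.1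
  have hE' : ∀ v ∈ dualLattice B L, ∃ x ∈ L,
      x = v + v - B m v • l + B l v • m - ((1 / 2 : ℚ) * B m m * B l v) • l := fun v hv =>
    ⟨_, hE v hv, by rw [eichler_apply]; module⟩
  have hlv : ∀ v ∈ dualLattice B L, ∃ n : ℤ, B l v = n := fun v hv => by
    obtain ⟨n, hn⟩ := hv l hl.1
    exact ⟨n, by rw [hsymm, hn]⟩
  have hrl : ∀ r : ℚ, r • l ∈ dualLattice B L → (2 * r) • l ∈ L := by
    intro r hr
    obtain ⟨x, hx, h⟩ := hE' _ hr
    simp only [map_smul, hll, hml, smul_eq_mul, mul_zero, zero_smul, sub_zero, add_zero] at h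
    rw [two_mul, add_smul, ← h]; exact hx
  -- A dual vector `f` with `(l, f) = 1`, by biduality and primitivity of `l`.
  obtain ⟨f, hf, hlf⟩ : ∃ f ∈ dualLattice B L, B l f = 1 := by
    obtain ⟨k, hk, hk'⟩ := exists_generator B l _ hlv
    by_cases hk0 : k = 0
    · exfalso
      have : (1 / 2 : ℚ) • l ∈ L := hdd _ fun v hv => by
        obtain ⟨n, hn⟩ := hk v hv
        exact ⟨0, by simp [hn, hk0]⟩
      obtain ⟨n, hn⟩ := primitive_smul hl this
      have : (2 * n : ℤ) = 1 := by
        have : (2 * n : ℚ) = 1 := by rw [← hn]; norm_num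
        exact_mod_cast this
      omega
    · have hkq : (k : ℚ) ≠ 0 := by exact_mod_cast hk0
      have : (k : ℚ)⁻¹ • l ∈ L := hdd _ fun v hv => by
        obtain ⟨n, hn⟩ := hk v hv
        exact ⟨n, by simp [hn]; field_simp⟩
      obtain ⟨n, hn⟩ := primitive_smul hl this
      obtain ⟨f, hf, h⟩ := hk' n
      exact ⟨f, hf, by rw [h, ← hn]; field_simp⟩
  -- The divisibility of `l` divides `2`, because `2` kills `(ℚl ∩ L^∨) / ℤl`.
  obtain ⟨g, hg, hlg⟩ : ∃ g ∈ L, B l g = 2 := by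
    obtain ⟨k, hk, hk'⟩ := exists_generator B l L (fun v hv => hlv v (h_int hv))
    by_cases hk0 : k = 0
    · exfalso
      have : (1 / 4 : ℚ) • l ∈ dualLattice B L := fun v hv => by
        obtain ⟨n, hn⟩ := hk v hv
        exact ⟨0, by simp [hn, hk0]⟩
      obtain ⟨n, hn⟩ := primitive_smul hl (hrl _ this)
      have : (2 * n : ℤ) = 1 := by
        have : (2 * n : ℚ) = 1 := by rw [← hn]; norm_num
        exact_mod_cast this
      omega
    · have hkq : (k : ℚ) ≠ 0 := by exact_mod_cast hk0
      have : (k : ℚ)⁻¹ • l ∈ dualLattice B L := fun v hv => by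
        obtain ⟨n, hn⟩ := hk v hv
        exact ⟨n, by simp [hn]; field_simp⟩
      obtain ⟨n, hn⟩ := primitive_smul hl (hrl _ this)
      obtain ⟨f, hf, h⟩ := hk' n
      exact ⟨f, hf, by rw [h, ← hn]; field_simp⟩
  -- On `l^⊥ ∩ L^∨` doubling is `v ↦ (m, v) l` modulo `L`.
  have hperp : ∀ v ∈ dualLattice B L, B l v = 0 → v + v - B m v • l ∈ L := fun v hv h => by
    obtain ⟨x, hx, hx'⟩ := hE' v hv
    rw [h] at hx'
    have : v + v - B m v • l = x := by rw [hx']; module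
    rw [this]; exact hx
  have hperpD : ∀ v ∈ dualLattice B L, B l v = 0 → B m v • l ∈ dualLattice B L :=
    fun v hv h => by
      have := sub_mem (add_mem hv hv) (h_int (hperp v hv h))
      simpa using this
  have hhalf : ∀ v ∈ dualLattice B L, B l v = 0 → ∃ n : ℤ, 2 * B m v = n := fun v hv h =>
    primitive_smul hl (hrl _ (hperpD v hv h))
  have hproj : ∀ v ∈ dualLattice B L, ∃ p : ℤ, B l v = p ∧
      v - (p : ℚ) • f ∈ dualLattice B L ∧ B l (v - (p : ℚ) • f) = 0 := fun v hv => by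
    obtain ⟨p, hp⟩ := hlv v hv
    exact ⟨p, hp, sub_mem hv (intSmul _ p hf), by simp [hp, hlf]⟩
  -- Were `(m, v)` always integral here, `m` could be moved into `L` and `2 A_L` would vanish.
  obtain ⟨a, ha, hla, hma⟩ : ∃ a ∈ dualLattice B L, B l a = 0 ∧ ¬ ∃ n : ℤ, B m a = n := by
    by_contra! hcon
    have hm' : m - B m f • l ∈ L := hdd _ fun v hv => by
      obtain ⟨p, hp, hpD, hp0⟩ := hproj v hv
      obtain ⟨n, hn⟩ := hcon _ hpD hp0
      refine ⟨n, ?_⟩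
      simp only [map_sub, map_smul, smul_eq_mul, LinearMap.sub_apply, LinearMap.smul_apply, hp]
        at hn ⊢
      linarith
    have hff : f + f ∈ L := by
      obtain ⟨x, hx, hx'⟩ := hE' f hf
      obtain ⟨n, hn⟩ := heven _ hm'
      simp only [map_sub, map_smul, smul_eq_mul, LinearMap.sub_apply, LinearMap.smul_apply,
        hll, hml, hlm] at hn
      have : f + f = x - (m - B m f • l) + (n : ℚ) • l := by
        have hn' : B m m = 2 * n := by linarith
        rw [hx', hlf, hn']; module
      rw [this]
      exact add_mem (sub_mem hx hm') (intSmul L n hl.1)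
    obtain ⟨v, hv, hvL⟩ := hnot
    apply hvL
    obtain ⟨p, hp, hpD, hp0⟩ := hproj v hv
    obtain ⟨n, hn⟩ := hcon _ hpD hp0
    have h := hperp _ hpD hp0
    rw [hn] at h
    have : v + v = ((v - (p : ℚ) • f) + (v - (p : ℚ) • f) - (n : ℚ) • l) + (n : ℚ) • l
        + (p : ℚ) • (f + f) := by module
    rw [this]
    exact add_mem (add_mem h (intSmul L n hl.1)) (intSmul L p hff)
  obtain ⟨c, hc⟩ : ∃ c : V, c = (1 / 2 : ℚ) • l := ⟨_, rfl⟩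
  have hcL : c ∉ L := fun h => by
    rw [hc] at h
    obtain ⟨n, hn⟩ := primitive_smul hl h
    have : (2 * n : ℤ) = 1 := by
      have : (2 * n : ℚ) = 1 := by rw [← hn]; norm_num
      exact_mod_cast this
    omega
  have hcc : c + c ∈ L := by
    have : c + c = l := by rw [hc]; module
    rw [this]; exact hl.1
  have hcn : ∀ n : ℤ, (n : ℚ) • c ∈ L ∨ (n : ℚ) • c - c ∈ L := fun n => by
    rcases Int.even_or_odd' n with ⟨k, rfl | rfl⟩
    · left
      have : ((2 * k : ℤ) : ℚ) • c = (k : ℚ) • (c + c) := by push_cast; module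
      rw [this]; exact intSmul L k hcc
    · right
      have : ((2 * k + 1 : ℤ) : ℚ) • c - c = (k : ℚ) • (c + c) := by push_cast; module
      rw [this]; exact intSmul L k hcc
  have hperpc : ∀ v ∈ dualLattice B L, B l v = 0 → ∃ n : ℤ, v + v - (n : ℚ) • c ∈ L ∧
      2 * B m v = n := fun v hv h => by
    obtain ⟨n, hn⟩ := hhalf v hv h
    refine ⟨n, ?_, hn⟩
    have : (n : ℚ) • c = B m v • l := by rw [← hn, hc]; module
    rw [this]; exact hperp v hv h
  have hac : (a + a) - c ∈ L := by
    obtain ⟨n, hn, hn'⟩ := hperpc a ha hla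
    rcases Int.even_or_odd' n with ⟨k, rfl | rfl⟩
    · exact absurd ⟨k, by push_cast at hn'; linarith⟩ hma
    · have : (a + a) - c = (a + a - ((2 * k + 1 : ℤ) : ℚ) • c) + (k : ℚ) • (c + c) := by
        push_cast; module
      rw [this]; exact add_mem hn (intSmul L k hcc)
  -- `4f` is a multiple of `c = l / 2` modulo `L`, since `2f - g ∈ l^⊥`.
  obtain ⟨q, hq⟩ : ∃ q : ℤ, (f + f) + (f + f) - (q : ℚ) • c ∈ L := by
    obtain ⟨q, hq, -⟩ := hperpc (f + f - g) (sub_mem (add_mem hf hf) (h_int hg))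
      (by simp [hlf, hlg]; norm_num)
    refine ⟨q, ?_⟩
    have : (f + f) + (f + f) - (q : ℚ) • c
        = (f + f - g) + (f + f - g) - (q : ℚ) • c + (g + g) := by module
    rw [this]; exact add_mem hq (add_mem hg hg)
  -- `2f` is not a multiple of `c`: pair with `a`, using `(f, c) = 1/2` and `(c, a) = 0`.
  have hfc : ∀ k : ℤ, (f + f) - (k : ℚ) • c ∉ L := fun k h => by
    obtain ⟨i, hi⟩ := hf _ hac
    obtain ⟨j, hj⟩ := ha _ h
    have h1 : B f l = 1 := by rw [hsymm, hlf]
    have h2 : B a l = 0 := by rw [hsymm, hla]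
    simp only [hc, map_sub, map_add, map_smul, smul_eq_mul, h1, h2] at hi hj
    rw [hsymm a f] at hj
    have : (2 * (j - i) : ℤ) = 1 := by
      have : (2 * (j - i) : ℚ) = 1 := by rw [← hi, ← hj]; ring
      exact_mod_cast this
    omega
  refine ⟨a, ha, f, hf, fun h => hcL ?_, fun h => hfc 0 ?_, fun h => hfc (-1) ?_,
    fun h => hfc 1 ?_, fun v hv => ?_⟩
  · have := sub_mem h hac
    simpa using this
  · simpa using h
  · have := sub_mem h hac
    convert this using 1
    push_cast; module
  · have := sub_mem hac h
    convert this using 1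
    push_cast; module
  · obtain ⟨p, hp, hpD, hp0⟩ := hproj v hv
    obtain ⟨n, hn, -⟩ := hperpc _ hpD hp0
    rcases Int.even_or_odd' p with ⟨k, rfl | rfl⟩
    · have key : v + v - ((n + k * q : ℤ) : ℚ) • c ∈ L := by
        convert add_mem hn (intSmul L k hq) using 1
        push_cast; module
      rcases hcn (n + k * q) with h | h
      · left
        simpa using add_mem key h
      · right; left
        convert sub_mem (add_mem key h) hac using 1
        module
    · have key : v + v - (f + f) - ((n + k * q : ℤ) : ℚ) • c ∈ L := by
        convert add_mem hn (intSmul L k hq) using 1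
        push_cast; module
      rcases hcn (n + k * q) with h | h
      · right; right; left
        simpa using add_mem key h
      · right; right; right
        convert sub_mem (add_mem key h) hac using 1
        module

/-! ### Unipotence, biduality and the quotient -/

theorem eichler_unipotent (B : BilinForm ℚ V) {m l : V} (hll : B l l = 0) (hml : B m l = 0)
    (hlm : B l m = 0) (u : V) :
    (eichler B m l - 1) ((eichler B m l - 1) ((eichler B m l - 1) u)) = 0 := by
  have h : ∀ x, (eichler B m l - 1) x
      = B l x • m - (B m x + (1 / 2 : ℚ) * B m m * B l x) • l := fun x => by
    rw [LinearMap.sub_apply, eichler_apply, Module.End.one_apply]; module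
  simp only [h, map_sub, map_smul, hll, hml, hlm, smul_eq_mul]
  module

/-- The determinant is the value at `-1` of the characteristic polynomial `X ^ n` of the nilpotent
endomorphism `E_{m,l} - 1`. -/
theorem det_neg_eichler [FiniteDimensional ℚ V] (B : BilinForm ℚ V) {m l : V}
    (hll : B l l = 0) (hml : B m l = 0) (hlm : B l m = 0) :
    LinearMap.det (-(eichler B m l)) = (-1) ^ Module.finrank ℚ V := by
  have hnil : IsNilpotent (eichler B m l - 1) :=
    ⟨3, LinearMap.ext fun u => by
      simpa [pow_succ, Module.End.mul_apply] using eichler_unipotent B hll hml hlm u⟩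
  have h := (eichler B m l - 1).eval_charpoly (-1)
  rw [(LinearMap.isNilpotent_iff_charpoly _).1 hnil] at h
  have h' : algebraMap ℚ (V →ₗ[ℚ] V) (-1) - (eichler B m l - 1) = -(eichler B m l) := by
    rw [map_neg, map_one]; abel
  rw [h'] at h
  rw [← h]; simp

/-- Modulo `L`, if `E v ≡ -v` then `0 = (E - 1)³ v ≡ -8 v`. -/
theorem eight_smul_mem (B : BilinForm ℚ V) {L : Submodule ℤ V} {m l : V} (hll : B l l = 0)
    (hml : B m l = 0) (hlm : B l m = 0) (hEL : ∀ x ∈ L, eichler B m l x ∈ L) {v : V}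
    (hv : eichler B m l v + v ∈ L) : (8 : ℚ) • v ∈ L := by
  have h := eichler_unipotent B hll hml hlm v
  obtain ⟨a, ha⟩ : ∃ a, a = eichler B m l v + v := ⟨_, rfl⟩
  have hv' : eichler B m l v = a - v := by rw [ha]; abel
  rw [← ha] at hv
  simp only [LinearMap.sub_apply, Module.End.one_apply, hv', map_sub] at h
  have : (8 : ℚ) • v = eichler B m l (eichler B m l a) - (4 : ℤ) • eichler B m l a
      + (7 : ℤ) • a := by
    rw [← sub_eq_zero, ← neg_eq_zero, ← h]; module
  rw [this]
  exact add_mem (sub_mem (hEL _ (hEL _ hv)) (L.smul_mem _ (hEL _ hv))) (L.smul_mem _ hv)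

/-- Biduality `L^∨∨ ⊆ L`; a `ℤ`-basis of `L` is a `ℚ`-basis of `V`, to which Mathlib's biduality
for spans of bases applies. -/
theorem mem_of_dual_dual (B : BilinForm ℚ V) (hsymm : ∀ x y : V, B x y = B y x)
    (hnd : LinearMap.BilinForm.Nondegenerate B) (L : Submodule ℤ V) (hfg : L.FG)
    (hspan : Submodule.span ℚ (L : Set V) = ⊤) (x : V)
    (hx : ∀ v ∈ dualLattice B L, ∃ n : ℤ, B x v = n) : x ∈ L := by
  have : Module.Finite ℤ L := Module.Finite.iff_fg.2 hfg
  have : IsAddTorsionFree V := IsAddTorsionFree.of_module_rat V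
  let b := Module.Free.chooseBasis ℤ L
  have hb : Submodule.span ℤ (Set.range fun i => (b i : V)) = L := by
    have : (Set.range fun i => (b i : V)) = L.subtype '' Set.range b := by
      rw [← Set.range_comp]; rfl
    rw [this, ← Submodule.map_span, b.span_eq, Submodule.map_subtype_top]
  have hli : LinearIndependent ℚ fun i => (b i : V) := by
    rw [← LinearIndependent.iff_fractionRing ℤ ℚ]
    exact b.linearIndependent.map' L.subtype (Submodule.ker_subtype L)
  let c : Module.Basis _ ℚ V := Module.Basis.mk hli (by
    rw [← hspan, Submodule.span_le]
    intro y hy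
    rw [SetLike.mem_coe, ← hb] at hy
    exact Submodule.span_le_restrictScalars ℤ ℚ _ hy)
  have hc : Submodule.span ℤ (Set.range c) = L := by
    rw [Module.Basis.coe_mk]; exact hb
  have h := LinearMap.BilinForm.dualSubmodule_dualSubmodule_of_basis (R := ℤ) (B := B) hnd
    ⟨hsymm⟩ c
  rw [hc] at h
  rw [← h]
  intro y hy
  obtain ⟨n, hn⟩ := hx y (fun z hz => by
    obtain ⟨n, hn⟩ := Submodule.mem_one.1 (hy z hz)
    exact ⟨n, by rw [← hn]; simp⟩)
  exact Submodule.mem_one.2 ⟨n, by rw [hn]; simp⟩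

/-- The representatives produced by `core`, read in the quotient `L^∨ / L`. -/
theorem discGroup_equiv (B : BilinForm ℚ V) (L : Submodule ℤ V) (hfg : L.FG)
    (h8 : ∀ v ∈ dualLattice B L, (8 : ℚ) • v ∈ L)
    (h : ∃ a ∈ dualLattice B L, ∃ b ∈ dualLattice B L,
      a + a ∉ L ∧ b + b ∉ L ∧ (a + a) + (b + b) ∉ L ∧ (a + a) - (b + b) ∉ L ∧
      ∀ v ∈ dualLattice B L, v + v ∈ L ∨ (v + v) - (a + a) ∈ L ∨ (v + v) - (b + b) ∈ L ∨
        (v + v) - ((a + a) + (b + b)) ∈ L) :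
    ∃ a : ℕ,
      Nonempty (discGroup B L ≃+ (ZMod 8 × (Fin a → ZMod 2))) ∨
      Nonempty (discGroup B L ≃+ ((ZMod 4 × ZMod 4) × (Fin a → ZMod 2))) := by
  have hLfin : Module.Finite ℤ L := Module.Finite.iff_fg.2 hfg
  -- Multiplication by `8` embeds the dual lattice into `L`, so it is finitely generated.
  let φ : dualLattice B L →ₗ[ℤ] L :=
    { toFun := fun v => ⟨(8 : ℚ) • (v : V), h8 v v.2⟩
      map_add' := fun x y => by ext; simp
      map_smul' := fun n x => Subtype.ext (smul_comm (8 : ℚ) n (x : V)) }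
  have hφ : Function.Injective φ := fun x y hxy => by
    have h' : (8 : ℚ) • (x : V) = (8 : ℚ) • (y : V) := congrArg Subtype.val hxy
    exact Subtype.ext (smul_right_injective V (by norm_num : (8 : ℚ) ≠ 0) h')
  have hDfin : Module.Finite ℤ (dualLattice B L) := Module.Finite.of_injective φ hφ
  let N := Submodule.comap (dualLattice B L).subtype L
  have h8' : ∀ q : discGroup B L, (8 : ℕ) • q = 0 := fun q => by
    obtain ⟨v, rfl⟩ := Submodule.Quotient.mk_surjective N q
    rw [← Submodule.Quotient.mk_smul, Submodule.Quotient.mk_eq_zero]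
    change ((8 : ℕ) • v : V) ∈ L
    have := h8 v v.2
    convert this using 1
    module
  have hfin : Finite (discGroup B L) := by
    apply Module.finite_of_fg_torsion
    intro q
    exact ⟨⟨8, mem_nonZeroDivisors_of_ne_zero (by norm_num)⟩, by
      have := h8' q
      rw [← natCast_zsmul] at this
      exact this⟩
  obtain ⟨a, ha, b, hb, h1, h2, h3, h4, h5⟩ := h
  have hmk : ∀ x y : dualLattice B L, (N.mkQ x = N.mkQ y) ↔ (x : V) - y ∈ L := fun x y =>
    Submodule.Quotient.eq N
  refine classify h8' ?_
  let α : dualLattice B L := ⟨a, ha⟩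
  let β : dualLattice B L := ⟨b, hb⟩
  have hrange : (Set.range fun q : discGroup B L => q + q)
      = {N.mkQ 0, N.mkQ (α + α), N.mkQ (β + β), N.mkQ ((α + α) + (β + β))} := by
    ext q
    simp only [Set.mem_range, Set.mem_insert_iff, Set.mem_singleton_iff]
    constructor
    · rintro ⟨q, rfl⟩
      obtain ⟨v, rfl⟩ := N.mkQ_surjective q
      rw [← map_add, hmk, hmk, hmk, hmk]
      simpa using h5 v v.2
    · rintro (rfl | rfl | rfl | rfl)
      · exact ⟨0, by simp⟩
      · exact ⟨N.mkQ α, by rw [map_add]⟩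
      · exact ⟨N.mkQ β, by rw [map_add]⟩
      · exact ⟨N.mkQ (α + β), by rw [← map_add]; congr 1; abel⟩
  have hne : ∀ x y : dualLattice B L, (x : V) - y ∉ L → N.mkQ x ≠ N.mkQ y :=
    fun x y h h' => h ((hmk x y).1 h')
  have hneg : ∀ x : V, x ∉ L → -x ∉ L := fun x hx h => hx (by simpa using neg_mem h)
  rw [hrange, Set.ncard_insert_of_notMem, Set.ncard_insert_of_notMem, Set.ncard_pair]
  · refine hne _ _ ?_
    change b + b - (a + a + (b + b)) ∉ L
    convert hneg _ h1 using 2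
    abel
  · rintro (h | h)
    · exact hne _ _ h4 h
    · refine hne _ _ ?_ h
      change a + a - (a + a + (b + b)) ∉ L
      convert hneg _ h2 using 2
      abel
  · rintro (h | h | h)
    · refine hne _ _ ?_ h
      change 0 - (a + a) ∉ L
      convert hneg _ h1 using 2
      abel
    · refine hne _ _ ?_ h
      change 0 - (b + b) ∉ L
      convert hneg _ h2 using 2
      abel
    · refine hne _ _ ?_ h
      change 0 - (a + a + (b + b)) ∉ L
      convert hneg _ h3 using 2
      abel

/-- for `L = M ⊕ ⟨-2d⟩` and the group `Γ` acting by `det(γ)·id` on `A_M`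
and trivially on `A_{⟨-2d⟩}` (the generalized-Kummer modular group): (a) an irregular
0-dimensional cusp forces `d ∣ 4`; (b) if moreover the rank of `L` is even, then
`A_L ≅ ℤ/8 ⊕ (ℤ/2)^a` or `A_L ≅ ℤ/4 ⊕ ℤ/4 ⊕ (ℤ/2)^a` as abelian groups. -/
theorem statement12 (B : BilinForm ℚ V) [FiniteDimensional ℚ V]
    (hsymm : ∀ x y : V, B x y = B y x)
    (hnd : LinearMap.BilinForm.Nondegenerate B)
    (M : Submodule ℤ V)
    (hintM : ∀ x ∈ M, ∀ y ∈ M, ∃ n : ℤ, B x y = (n : ℚ))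
    (hevenM : ∀ x ∈ M, ∃ n : ℤ, B x x = 2 * (n : ℚ))
    (d : ℕ) (hd : 0 < d) (w : V) (hw : B w w = -(2 * (d : ℚ)))
    (horth : ∀ x ∈ M, B w x = 0)
    (L : Submodule ℤ V) (hL : L = M ⊔ Submodule.span ℤ {w})
    (hfg : L.FG) (hspan : Submodule.span ℚ (L : Set V) = ⊤)
    (Γ : Set (V ≃ₗ[ℚ] V))
    (hΓ : Γ = {γ : V ≃ₗ[ℚ] V |
      (∀ v u : V, B (γ v) (γ u) = B v u) ∧ (∀ x ∈ L, γ x ∈ L) ∧ (∀ x ∈ L, γ⁻¹ x ∈ L) ∧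
      γ ((2 * (d : ℚ))⁻¹ • w) - (2 * (d : ℚ))⁻¹ • w ∈ L ∧
      ∀ u : V, u ∈ Submodule.span ℚ (M : Set V) →
        (∀ x ∈ M, ∃ n : ℤ, B u x = (n : ℚ)) →
        γ u - LinearMap.det (γ : V →ₗ[ℚ] V) • u ∈ L})
    (hirr : ∃ l : V, IsPrimitiveIn L l ∧ B l l = 0 ∧ IsIrregular B Γ l) :
    d ∣ 4 ∧
    (Even (Module.finrank ℚ V) →
      ∃ a : ℕ,
        Nonempty (discGroup B L ≃+ (ZMod 8 × (Fin a → ZMod 2))) ∨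
        Nonempty (discGroup B L ≃+ ((ZMod 4 × ZMod 4) × (Fin a → ZMod 2)))) := by
  subst hΓ
  obtain ⟨l, hl, hll, hneg, m, hml, γ, ⟨hγiso, hγL, -, hγw, hγM⟩, hγE⟩ := hirr
  have hlm : B l m = 0 := by rw [hsymm, hml]
  have hγE' : ∀ x, γ x = -(eichler B m l x) := fun x => by
    have := LinearMap.congr_fun hγE x
    simpa using this
  have hdq : (d : ℚ) ≠ 0 := by exact_mod_cast hd.ne'
  have hmemL : ∀ x ∈ L, ∃ a ∈ M, ∃ k : ℤ, x = a + (k : ℚ) • w := fun x hx => by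
    rw [hL, Submodule.mem_sup] at hx
    obtain ⟨a, ha, y, hy, rfl⟩ := hx
    obtain ⟨k, rfl⟩ := Submodule.mem_span_singleton.1 hy
    exact ⟨a, ha, k, by rw [Int.cast_smul_eq_zsmul]⟩
  have hML : M ≤ L := by rw [hL]; exact le_sup_left
  have hwL : w ∈ L := by
    rw [hL]; exact Submodule.mem_sup_right (Submodule.mem_span_singleton_self w)
  have horth' : ∀ x ∈ M, B x w = 0 := fun x hx => by rw [hsymm, horth x hx]
  have h_int : L ≤ dualLattice B L := fun x hx y hy => by
    obtain ⟨a, ha, j, rfl⟩ := hmemL x hx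
    obtain ⟨b, hb, k, rfl⟩ := hmemL y hy
    obtain ⟨n, hn⟩ := hintM a ha b hb
    refine ⟨n - 2 * d * j * k, ?_⟩
    simp only [map_add, map_smul, LinearMap.add_apply, LinearMap.smul_apply, smul_eq_mul, hn, hw,
      horth b hb, horth' a ha]
    push_cast; ring
  have heven : ∀ x ∈ L, ∃ n : ℤ, B x x = 2 * (n : ℚ) := fun x hx => by
    obtain ⟨a, ha, j, rfl⟩ := hmemL x hx
    obtain ⟨n, hn⟩ := hevenM a ha
    refine ⟨n - d * j * j, ?_⟩
    simp only [map_add, map_smul, LinearMap.add_apply, LinearMap.smul_apply, smul_eq_mul, hn, hw,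
      horth a ha, horth' a ha]
    push_cast; ring
  have hEL : ∀ x ∈ L, eichler B m l x ∈ L := fun x hx => by
    have := neg_mem (hγL x hx)
    rwa [hγE', neg_neg] at this
  have hEw : eichler B m l ((2 * (d : ℚ))⁻¹ • w) + (2 * (d : ℚ))⁻¹ • w ∈ L := by
    have := neg_mem hγw
    rw [hγE'] at this
    convert this using 1
    abel
  refine ⟨?_, fun hev => ?_⟩
  · -- `w / 2d` has order `2d` in the discriminant group, and it is killed by `8`.
    obtain ⟨a, ha, k, h⟩ := hmemL _ (eight_smul_mem B hll hml hlm hEL hEw)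
    have h' := congrArg (B w) h
    simp only [map_add, map_smul, smul_eq_mul, hw, horth a ha] at h'
    have h4 : (d : ℚ) * k = 4 := by
      field_simp at h'
      linarith
    have h4' : (d : ℤ) * k = 4 := by exact_mod_cast h4
    exact_mod_cast (Dvd.intro _ h4' : (d : ℤ) ∣ 4)
  · have hdet : LinearMap.det (γ : V →ₗ[ℚ] V) = 1 := by
      rw [hγE, det_neg_eichler B hll hml hlm, hev.neg_one_pow]
    -- `L^∨ = M^∨ ⊕ ℤ (w / 2d)`.
    have hdecomp : ∀ v ∈ dualLattice B L, ∃ u ∈ Submodule.span ℚ (M : Set V),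
        (∀ x ∈ M, ∃ n : ℤ, B u x = n) ∧ ∃ k : ℤ, v = u + (k : ℚ) • ((2 * (d : ℚ))⁻¹ • w) := by
      intro v hv
      obtain ⟨u, hu, t, rfl⟩ : ∃ u ∈ Submodule.span ℚ (M : Set V), ∃ t : ℚ, v = u + t • w := by
        have hle : Submodule.span ℚ (L : Set V)
            ≤ Submodule.span ℚ (M : Set V) ⊔ Submodule.span ℚ {w} := by
          rw [Submodule.span_le]
          intro x hx
          obtain ⟨a, ha, k, rfl⟩ := hmemL x hx
          exact Submodule.add_mem_sup (Submodule.subset_span ha)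
            (Submodule.smul_mem _ _ (Submodule.mem_span_singleton_self w))
        have hv' : v ∈ Submodule.span ℚ (L : Set V) := by rw [hspan]; trivial
        obtain ⟨u, hu, y, hy, h⟩ := Submodule.mem_sup.1 (hle hv')
        obtain ⟨t, rfl⟩ := Submodule.mem_span_singleton.1 hy
        exact ⟨u, hu, t, h.symm⟩
      have huw : B u w = 0 := by
        rw [hsymm]
        have : Submodule.span ℚ (M : Set V) ≤ LinearMap.ker (B w) :=
          Submodule.span_le.2 fun x hx => horth x hx
        exact this hu
      refine ⟨u, hu, fun x hx => ?_, ?_⟩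
      · obtain ⟨n, hn⟩ := hv x (hML hx)
        exact ⟨n, by simpa [horth x hx] using hn⟩
      · obtain ⟨n, hn⟩ := hv w hwL
        simp only [map_add, map_smul, LinearMap.add_apply, LinearMap.smul_apply, smul_eq_mul, huw,
          hw] at hn
        refine ⟨-n, ?_⟩
        rw [smul_smul]
        congr 2
        push_cast
        rw [← hn]
        field_simp
        ring
    have hE : ∀ v ∈ dualLattice B L, eichler B m l v + v ∈ L := by
      intro v hv
      obtain ⟨u, hu, hu', k, rfl⟩ := hdecomp v hv
      have h := neg_mem (hγM u hu hu')
      rw [hγE', hdet, one_smul] at h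
      convert add_mem h (intSmul L k hEw) using 1
      rw [map_add, map_smul]
      module
    have hdd := mem_of_dual_dual B hsymm hnd L hfg hspan
    refine discGroup_equiv B L hfg (fun v hv => eight_smul_mem B hll hml hlm hEL (hE v hv))
      (core B hsymm L h_int heven hdd l m hl hll hml hE ?_)
    -- If `2` killed the discriminant group, `-id` would lie in the group, as its determinant is `1`.
    by_contra! h2
    apply hneg
    have hdetneg : LinearMap.det ((LinearEquiv.neg ℚ : V ≃ₗ[ℚ] V) : V →ₗ[ℚ] V) = 1 := by
      have : ((LinearEquiv.neg ℚ : V ≃ₗ[ℚ] V) : V →ₗ[ℚ] V) = (-1 : ℚ) • LinearMap.id := by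
        ext x; simp
      rw [this, LinearMap.det_smul, LinearMap.det_id, hev.neg_one_pow, one_mul]
    refine ⟨fun v u => by simp, fun x hx => by simpa using hx, fun x hx => ?_, ?_,
      fun u hu hu' => ?_⟩
    · have : (LinearEquiv.neg ℚ : V ≃ₗ[ℚ] V)⁻¹ x = -x := by
        rw [LinearEquiv.coe_inv, LinearEquiv.symm_apply_eq]; simp
      rw [this]; exact neg_mem hx
    · have hwD : (2 * (d : ℚ))⁻¹ • w ∈ dualLattice B L := fun x hx => by
        obtain ⟨a, ha, k, rfl⟩ := hmemL x hx
        refine ⟨-k, ?_⟩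
        simp only [map_add, map_smul, LinearMap.smul_apply, smul_eq_mul, hw, horth a ha]
        push_cast; field_simp; ring
      have := neg_mem (h2 _ hwD)
      convert this using 1
      simp only [LinearEquiv.neg_apply]
      abel
    · have huw : B u w = 0 := by
        rw [hsymm]
        have : Submodule.span ℚ (M : Set V) ≤ LinearMap.ker (B w) :=
          Submodule.span_le.2 fun x hx => horth x hx
        exact this hu
      have huD : u ∈ dualLattice B L := fun x hx => by
        obtain ⟨a, ha, k, rfl⟩ := hmemL x hx
        obtain ⟨n, hn⟩ := hu' a ha
        exact ⟨n, by simp [hn, huw]⟩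
      rw [hdetneg]
      have := neg_mem (h2 _ huD)
      convert this using 1
      simp only [LinearEquiv.neg_apply]
      module
end
end

section
/- Let M and K be even lattices such that the discriminant group A_K = K^∨/K is of odd order greater than 1, and let L = M ⊕ K be the orthogonal direct sum. Let Γ = {γ ∈ O(L) : γu − u ∈ L for all u ∈ K^∨, and either γv − v ∈ L for all v ∈ M^∨ or γv + v ∈ L for all v ∈ M^∨}. Then there exist no primitive isotropic vector l ∈ L and m ∈ L_ℚ with (m,l) = 0 such that −E_{m,l} ∈ Γ. In particular, Γ has no irregular 0-dimensional cusp. -/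
/-!
Suppose `γ = -E_{m,l}` lies in `Γ`. Let `d > 0` generate the ideal `(l, L) ⊆ ℤ`, and write
`l = a + b` with `a ∈ M`, `b ∈ K`. Then `a/d ∈ M^∨`, `b/d ∈ K^∨` and `γ l = -l`. Since `γ` acts
trivially on `A_K` and by a sign on `A_M`, comparing `K`-components of `γ(l/d) = -l/d` modulo `L`
gives `2b/d ∈ K`, so `b/d ∈ K` because `|A_K|` is odd.

Hence every `u ∈ K^∨` satisfies `(l, u) = (b, u) = k d` for an integer `k`. Choose `x ∈ L` with
`(l, x) = d`. The vector `w = u - k x` is orthogonal to `l` and congruent to `u` modulo `L`, so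
`γ w - w = -2w + c l` with `c = (m, w)`, and this vector lies in `L`. Pairing it with `x` shows
`c d ∈ ℤ`, whence `c b = (c d)(b/d) ∈ K`. Comparing `K`-components once more, `2u ∈ K`, so
`u ∈ K` by oddness. Thus `K^∨ = K`, contradicting `|A_K| > 1`.
-/


noncomputable section

open LinearMap (BilinForm)

variable {V : Type*} [AddCommGroup V] [Module ℚ V]

/-- The dual `K^∨ ⊆ K_ℚ` of a sublattice `K`, inside its own rational span. -/
def relDualLattice (B : BilinForm ℚ V) (K : Submodule ℤ V) : Submodule ℤ V :=
  (Submodule.restrictScalars ℤ (Submodule.span ℚ (K : Set V))) ⊓ dualLattice B K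

/-- The discriminant group `A_K = K^∨/K` of a sublattice `K`. -/
abbrev relDiscGroup (B : BilinForm ℚ V) (K : Submodule ℤ V) :=
  (relDualLattice B K) ⧸ (Submodule.comap (relDualLattice B K).subtype K)

open Submodule in
/-- The projection `L_ℚ → K_ℚ` along `M_ℚ` maps `L = M ⊕ K` to `K`; the sum of the rational spans
is direct because a vector in both is orthogonal to everything. -/
lemma right_component_mem (B : BilinForm ℚ V)
    (hsymm : ∀ x y : V, B x y = B y x) (hnd : LinearMap.BilinForm.Nondegenerate B)
    (M K : Submodule ℤ V) (horth : ∀ x ∈ M, ∀ y ∈ K, B x y = 0)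
    (hspan : span ℚ ((M ⊔ K : Submodule ℤ V) : Set V) = ⊤)
    {p q : V} (hp : p ∈ span ℚ (M : Set V)) (hq : q ∈ span ℚ (K : Set V))
    (h : p + q ∈ M ⊔ K) : q ∈ K := by
  have horth1 : ∀ y ∈ K, ∀ z ∈ span ℚ (M : Set V), B z y = 0 := by
    intro y hy z hz
    have : span ℚ (M : Set V) ≤ LinearMap.ker (B.flip y) :=
      span_le.2 fun x hx => by simpa using horth x hx y hy
    simpa using this hz
  have horth2 : ∀ y ∈ M, ∀ z ∈ span ℚ (K : Set V), B z y = 0 := by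
    intro y hy z hz
    have : span ℚ (K : Set V) ≤ LinearMap.ker (B y) :=
      span_le.2 fun x hx => by simpa using horth y hy x hx
    rw [hsymm]
    simpa using this hz
  obtain ⟨a, ha, b, hb, hab⟩ := mem_sup.1 h
  have e : q - b = a - p := by
    rw [sub_eq_sub_iff_add_eq_add, hab, add_comm]
  have hK : q - b ∈ span ℚ (K : Set V) := sub_mem hq (subset_span hb)
  have hM : q - b ∈ span ℚ (M : Set V) := e ▸ sub_mem (subset_span ha) hp
  have hz : q - b = 0 := by
    refine hnd.1 _ fun y => ?_
    have : span ℚ ((M ⊔ K : Submodule ℤ V) : Set V) ≤ LinearMap.ker (B (q - b)) := by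
      refine span_le.2 fun x hx => ?_
      obtain ⟨s, hs, t, ht, rfl⟩ := mem_sup.1 hx
      simp only [SetLike.mem_coe, LinearMap.mem_ker, map_add]
      rw [horth2 s hs _ hK, horth1 t ht _ hM, add_zero]
    exact this (hspan ▸ mem_top)
  rw [sub_eq_zero.1 hz]
  exact hb

lemma mem_of_two_smul_mem_of_odd (B : BilinForm ℚ V) (K : Submodule ℤ V)
    (hodd : Odd (Nat.card (relDiscGroup B K))) {v : V} (hv : v ∈ relDualLattice B K)
    (h2 : (2 : ℚ) • v ∈ K) : v ∈ K := by
  obtain ⟨k, hk⟩ := hodd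
  have h0 : Nat.card (relDiscGroup B K) •
      (Submodule.Quotient.mk ⟨v, hv⟩ : relDiscGroup B K) = 0 := card_nsmul_eq_zero'
  rw [← Submodule.Quotient.mk_smul, Submodule.Quotient.mk_eq_zero, hk] at h0
  have h1 : (2 * k + 1) • v ∈ K := h0
  have e : v = (2 * k + 1) • v - k • ((2 : ℚ) • v) := by module
  rw [e]
  exact sub_mem h1 (K.smul_of_tower_mem k h2)

/-- A functional that is integral on `L` and not identically zero there attains on `L` a nonzero
value `d` that divides all its other values. -/
lemma exists_generator_value (L : Submodule ℤ V) (f : V →ₗ[ℚ] ℚ)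
    (hint : ∀ x ∈ L, ∃ n : ℤ, f x = n) (hne : ∃ x ∈ L, f x ≠ 0) :
    ∃ d : ℤ, d ≠ 0 ∧ (∃ x ∈ L, f x = d) ∧ ∀ x ∈ L, ∃ n : ℤ, f x = n * d := by
  let I : Submodule ℤ ℤ :=
    Submodule.comap (Algebra.linearMap ℤ ℚ) (Submodule.map (f.restrictScalars ℤ) L)
  have hI : ∀ n : ℤ, n ∈ I ↔ ∃ x ∈ L, f x = n := fun n => by
    simp [I, Submodule.mem_map]
  obtain ⟨d, hd⟩ := IsPrincipalIdealRing.principal I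
  have hmul : ∀ x ∈ L, ∃ n : ℤ, f x = n * d := by
    intro x hx
    obtain ⟨n, hn⟩ := hint x hx
    have : n ∈ I := (hI n).2 ⟨x, hx, hn⟩
    rw [hd] at this
    obtain ⟨k, hk⟩ := Submodule.mem_span_singleton.1 this
    refine ⟨k, ?_⟩
    rw [hn, ← hk]
    simp
  refine ⟨d, ?_, (hI d).1 (hd ▸ Submodule.mem_span_singleton_self d), hmul⟩
  rintro rfl
  obtain ⟨x, hx, hx0⟩ := hne
  obtain ⟨n, hn⟩ := hmul x hx
  exact hx0 (by simpa using hn)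

/-- for `L = M ⊕ K` with `|A_K|` odd and `> 1`, the group `Γ` acting by
`±id` on `A_M` and trivially on `A_K` (the modular group for special cubic fourfolds)
contains no element `-E_{m,l}`; in particular it has no irregular 0-dimensional cusp. -/
theorem statement13 (B : BilinForm ℚ V) [FiniteDimensional ℚ V]
    (hsymm : ∀ x y : V, B x y = B y x)
    (hnd : LinearMap.BilinForm.Nondegenerate B)
    (M K : Submodule ℤ V)
    (hintM : ∀ x ∈ M, ∀ y ∈ M, ∃ n : ℤ, B x y = (n : ℚ))
    (hevenM : ∀ x ∈ M, ∃ n : ℤ, B x x = 2 * (n : ℚ))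
    (hintK : ∀ x ∈ K, ∀ y ∈ K, ∃ n : ℤ, B x y = (n : ℚ))
    (hevenK : ∀ x ∈ K, ∃ n : ℤ, B x x = 2 * (n : ℚ))
    (horth : ∀ x ∈ M, ∀ y ∈ K, B x y = 0)
    (hodd : Odd (Nat.card (relDiscGroup B K)))
    (hgt : 1 < Nat.card (relDiscGroup B K))
    (L : Submodule ℤ V) (hL : L = M ⊔ K)
    (hfg : L.FG) (hspan : Submodule.span ℚ (L : Set V) = ⊤)
    (Γ : Set (V ≃ₗ[ℚ] V))
    (hΓ : Γ = {γ : V ≃ₗ[ℚ] V |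
      (∀ v u : V, B (γ v) (γ u) = B v u) ∧ (∀ x ∈ L, γ x ∈ L) ∧ (∀ x ∈ L, γ⁻¹ x ∈ L) ∧
      (∀ u : V, u ∈ Submodule.span ℚ (K : Set V) →
        (∀ x ∈ K, ∃ n : ℤ, B u x = (n : ℚ)) → γ u - u ∈ L) ∧
      ((∀ u : V, u ∈ Submodule.span ℚ (M : Set V) →
          (∀ x ∈ M, ∃ n : ℤ, B u x = (n : ℚ)) → γ u - u ∈ L) ∨
        (∀ u : V, u ∈ Submodule.span ℚ (M : Set V) →
          (∀ x ∈ M, ∃ n : ℤ, B u x = (n : ℚ)) → γ u + u ∈ L))}) :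
    (¬ ∃ l : V, IsPrimitiveIn L l ∧ B l l = 0 ∧
        ∃ m : V, B m l = 0 ∧ ∃ γ ∈ Γ, (γ : V →ₗ[ℚ] V) = -(eichler B m l)) ∧
    ∀ l : V, IsPrimitiveIn L l → B l l = 0 → ¬ IsIrregular B Γ l := by
  have main : ¬ ∃ l : V, IsPrimitiveIn L l ∧ B l l = 0 ∧
        ∃ m : V, B m l = 0 ∧ ∃ γ ∈ Γ, (γ : V →ₗ[ℚ] V) = -(eichler B m l) := by
    rintro ⟨l, ⟨hlL, hprim⟩, hll, m, hml, γ, hγ, hγE⟩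
    have hE : ∀ v, γ v = -(v - B m v • l + B l v • m - ((1 / 2 : ℚ) * B m m * B l v) • l) :=
      fun v => LinearMap.congr_fun hγE v
    rw [hΓ] at hγ
    obtain ⟨-, hγL, -, hγK, hγM⟩ := hγ
    subst hL
    have proj : ∀ p q : V, p ∈ Submodule.span ℚ (M : Set V) →
        q ∈ Submodule.span ℚ (K : Set V) → p + q ∈ M ⊔ K → q ∈ K :=
      fun p q hp hq => right_component_mem B hsymm hnd M K horth hspan hp hq
    have half : ∀ v ∈ relDualLattice B K, (2 : ℚ) • v ∈ K → v ∈ K :=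
      fun v => mem_of_two_smul_mem_of_odd B K hodd
    have hML : M ≤ M ⊔ K := le_sup_left
    have hKL : K ≤ M ⊔ K := le_sup_right
    have hzK : ∀ (n : ℤ) (v : V), v ∈ K → (n : ℚ) • v ∈ K := fun n v hv => by
      rw [Int.cast_smul_eq_zsmul]; exact K.smul_mem n hv
    have hzL : ∀ (n : ℤ) (v : V), v ∈ M ⊔ K → (n : ℚ) • v ∈ M ⊔ K := fun n v hv => by
      rw [Int.cast_smul_eq_zsmul]; exact (M ⊔ K).smul_mem n hv
    have hintL : ∀ x ∈ M ⊔ K, ∀ y ∈ M ⊔ K, ∃ n : ℤ, B x y = n := by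
      intro x hx y hy
      obtain ⟨a, ha, b, hb, rfl⟩ := Submodule.mem_sup.1 hx
      obtain ⟨a', ha', b', hb', rfl⟩ := Submodule.mem_sup.1 hy
      obtain ⟨n, hn⟩ := hintM a ha a' ha'
      obtain ⟨k, hk⟩ := hintK b hb b' hb'
      refine ⟨n + k, ?_⟩
      simp only [map_add, LinearMap.add_apply]
      rw [hn, hk, horth a ha b' hb', hsymm b a', horth a' ha' b hb]
      push_cast
      ring
    have hl0 : l ≠ 0 := by
      rintro rfl
      rcases hprim 2 0 (zero_mem _) (by simp) with h | h <;> omega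
    have hne : ∃ x ∈ M ⊔ K, B l x ≠ 0 := by
      by_contra! hcon
      refine hl0 (hnd.1 l fun y => ?_)
      have : Submodule.span ℚ ((M ⊔ K : Submodule ℤ V) : Set V) ≤ LinearMap.ker (B l) :=
        Submodule.span_le.2 fun x hx => hcon x hx
      exact this (hspan ▸ Submodule.mem_top)
    obtain ⟨d, hd0, ⟨x, hxL, hx⟩, hdiv⟩ :=
      exists_generator_value (M ⊔ K) (B l) (hintL l hlL) hne
    have hdQ : (d : ℚ) ≠ 0 := by exact_mod_cast hd0
    obtain ⟨a, ha, b, hb, rfl⟩ := Submodule.mem_sup.1 hlL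
    have haS := Submodule.subset_span (R := ℚ) (s := (M : Set V)) ha
    have hbS := Submodule.subset_span (R := ℚ) (s := (K : Set V)) hb
    set a₁ : V := (d : ℚ)⁻¹ • a with ha₁
    set b₁ : V := (d : ℚ)⁻¹ • b with hb₁
    have ha₁S : a₁ ∈ Submodule.span ℚ (M : Set V) := Submodule.smul_mem _ _ haS
    have hb₁S : b₁ ∈ Submodule.span ℚ (K : Set V) := Submodule.smul_mem _ _ hbS
    have hbd : b = (d : ℚ) • b₁ := by rw [hb₁, smul_smul, mul_inv_cancel₀ hdQ, one_smul]
    have ha₁D : ∀ y ∈ M, ∃ n : ℤ, B a₁ y = n := by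
      intro y hy
      obtain ⟨n, hn⟩ := hdiv y (hML hy)
      rw [map_add, LinearMap.add_apply, hsymm b y, horth y hy b hb, add_zero] at hn
      refine ⟨n, ?_⟩
      rw [ha₁, map_smul, LinearMap.smul_apply, hn, smul_eq_mul]
      field_simp
    have hb₁D : ∀ y ∈ K, ∃ n : ℤ, B b₁ y = n := by
      intro y hy
      obtain ⟨n, hn⟩ := hdiv y (hKL hy)
      rw [map_add, LinearMap.add_apply, horth a ha y hy, zero_add] at hn
      refine ⟨n, ?_⟩
      rw [hb₁, map_smul, LinearMap.smul_apply, hn, smul_eq_mul]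
      field_simp
    have hγl : γ (a₁ + b₁) = -(a₁ + b₁) := by
      have h : γ (a + b) = -(a + b) := by
        rw [hE, hll, hml]
        simp
      rw [ha₁, hb₁, ← smul_add, map_smul, h, smul_neg]
    have hb₁K : b₁ ∈ K := by
      -- `2 b₁` is the `K`-component of an element of `L`, whichever sign `γ` has on `A_M`.
      refine half b₁ ⟨hb₁S, hb₁D⟩ ?_
      have h1 := hγK b₁ hb₁S hb₁D
      rw [map_add] at hγl
      have hγa : γ a₁ = -(a₁ + b₁) - γ b₁ := eq_sub_of_add_eq hγl
      rcases hγM with hM | hM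
      · have h2 := neg_mem (add_mem (hM a₁ ha₁S ha₁D) h1)
        refine proj ((2 : ℚ) • a₁) _ (Submodule.smul_mem _ _ ha₁S)
          (Submodule.smul_mem _ _ hb₁S) ?_
        convert h2 using 1
        rw [hγa]
        module
      · have h2 := neg_mem (add_mem (hM a₁ ha₁S ha₁D) h1)
        refine proj 0 _ (zero_mem _) (Submodule.smul_mem _ _ hb₁S) ?_
        convert h2 using 1
        rw [hγa]
        module
    have all : ∀ u ∈ relDualLattice B K, u ∈ K := by
      rintro u ⟨huS, huD⟩
      refine half u ⟨huS, huD⟩ ?_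
      have huS' : u ∈ Submodule.span ℚ (K : Set V) := huS
      have huMa : B a u = 0 := by
        have : Submodule.span ℚ (K : Set V) ≤ LinearMap.ker (B a) :=
          Submodule.span_le.2 fun y hy => horth a ha y hy
        exact this huS'
      have huM : ∀ y ∈ M, B u y = 0 := by
        intro y hy
        have : Submodule.span ℚ (K : Set V) ≤ LinearMap.ker (B y) :=
          Submodule.span_le.2 fun z hz => horth y hy z hz
        rw [hsymm]
        exact this huS'
      obtain ⟨k, hk⟩ := huD b₁ hb₁K
      have hlu : B (a + b) u = k * d := by
        rw [map_add, LinearMap.add_apply, huMa, zero_add, hsymm, hbd, map_smul, hk, smul_eq_mul,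
          mul_comm]
      set w : V := u - (k : ℚ) • x with hw
      have hlw : B (a + b) w = 0 := by
        rw [hw, map_sub, map_smul, hlu, hx, smul_eq_mul, sub_self]
      set c : ℚ := B m w with hc
      have hγw : γ w = -w + c • (a + b) := by
        rw [hE, hlw, ← hc]
        module
      have hL1 : -(2 : ℚ) • w + c • (a + b) ∈ M ⊔ K := by
        have h1 := hγK u huS' huD
        have h2 := hzL k _ (sub_mem (hγL x hxL) hxL)
        have h3 := sub_mem h1 h2
        have e : γ w = γ u - (k : ℚ) • γ x := by rw [hw, map_sub, map_smul]
        have e' : -(2 : ℚ) • w + c • (a + b) = γ w - w := by rw [hγw]; module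
        rw [e', e, hw]
        convert h3 using 1
        module
      -- Pair `-2w + c l` with `x`, using `(l, x) = d` and `(w, x) ∈ ℤ`.
      have hcd : ∃ n : ℤ, c * d = n := by
        obtain ⟨n₁, h1⟩ := hintL _ hL1 x hxL
        obtain ⟨n₂, h2⟩ := hintL x hxL x hxL
        obtain ⟨n₃, h3⟩ : ∃ n : ℤ, B u x = n := by
          obtain ⟨s, hs, t, ht, rfl⟩ := Submodule.mem_sup.1 hxL
          obtain ⟨n, hn⟩ := huD t ht
          exact ⟨n, by rw [map_add, huM s hs, hn, zero_add]⟩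
        refine ⟨n₁ + 2 * (n₃ - k * n₂), ?_⟩
        have hwx : B w x = n₃ - k * n₂ := by
          rw [hw, map_sub, LinearMap.sub_apply, map_smul, LinearMap.smul_apply, h3, h2,
            smul_eq_mul]
        rw [map_add, LinearMap.add_apply, map_smul, map_smul, LinearMap.smul_apply,
          LinearMap.smul_apply, hwx, hx, smul_eq_mul, smul_eq_mul] at h1
        push_cast
        linarith
      obtain ⟨n, hn⟩ := hcd
      have hcb : c • b ∈ K := by
        rw [hbd, smul_smul, hn]
        exact hzK n b₁ hb₁K
      have h4 : c • b - (2 : ℚ) • u ∈ K := by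
        refine proj (c • a) _ (Submodule.smul_mem _ _ haS)
          (sub_mem (Submodule.smul_mem _ _ hbS) (Submodule.smul_mem _ _ huS')) ?_
        have h5 := sub_mem hL1 (hzL (2 * k) x hxL)
        convert h5 using 1
        rw [hw]
        push_cast
        module
      have h6 := sub_mem hcb h4
      rwa [sub_sub_cancel] at h6
    have hsub : Subsingleton (relDiscGroup B K) :=
      Submodule.Quotient.subsingleton_iff.2 (eq_top_iff.2 fun u _ => all u u.2)
    exact hgt.not_ge (Finite.card_le_one_iff_subsingleton.2 hsub)
  exact ⟨main, fun l hl hll hirr => main ⟨l, hl, hll, hirr.2⟩⟩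
end
end
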